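/- arXiv:math/0508563 — 9 statements merged into one kernel-verified Lean document; each statement's English description precedes it below -/
import Mathlib

section
/- Let X be a Polish space and let E be an equivalence relation on X which is coanalytic as a subset of X × X (i.e., the complement of E in X × X is an analytic set). Then either E has at most countably many equivalence classes, or there exists a nonempty perfect subset P of X whose elements are pairwise E-inequivalent (for all distinct x, y in P, (x, y) is not in E). -/
/-!
# Silver's theorem

The proof is classical (no effective descriptive set theory) and goes through the
`G₀`-dichotomy of Kechris, Solecki and Todorcevic, in the form given by Miller, applied to the
analytic graph `Eᶜ` on `X`.

Suppose that `E` has uncountably many classes, and call a subset of `X` small if it meets only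
countably many classes. Fix a sequence `s k` of finite binary words, with `s k` of length `k`, such
that every word is an initial segment of some `s k`. The `G₀`-edges are the pairs of points of
`2^ℕ` which begin with `s k` for some `k`, differ at the place `k`, and agree afterwards.
`Silver.exists_homomorphism` builds a continuous `φ : 2^ℕ → X` sending `G₀`-edges to `E`-inequivalent
pairs. It is a limit of finite configurations, that is, finite trees of points of `X` whose edges
carry witnesses of membership in `Eᶜ`. One passes to a set `Y` with small complement such that, for
each basic open set of configurations in `Y`, the set of possible values at the vertex `s n` is empty
or not small. If it is not small, it contains two inequivalent points, so that two nearby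
configurations of level `n` can be joined to one configuration of level `n + 1`.

Let `A` be the set of pairs `(x, y)` with `φ x`, `φ y` inequivalent. It is analytic, hence
comeagre or meagre in some nonempty open set (`Silver.analytic_residual_or`). In the second case the
Kuratowski–Ulam theorem (`Silver.residual_sections`) gives a single class of the pulled back relation
which is comeagre in some nonempty open set. Such a class contains a `G₀`-edge, because flipping one
coordinate is a homeomorphism, and this is absurd. So `A` is comeagre, and Mycielski's theorem
(`Silver.mycielski`) yields a continuous `f : 2^ℕ → 2^ℕ` any two
distinct points of which are mapped to a pair in `A`.
The range of `φ ∘ f` is compact and uncountable, so it contains a nonempty perfect set.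

Words are lists with the newest letter at the head, following `PiNat.res`; initial segments of a
sequence are therefore suffixes of lists, and `i :: v` is the word `v` extended by the letter `i`.
-/

open Set Filter Topology PiNat

namespace Silver

/-! ### Baire category -/

/-- The part of the Baire property of analytic sets which is needed: an analytic set is comeagre or
meagre in some nonempty open set. If `A = f(ℕ^ℕ)` is everywhere non-meagre, let `U s` be the largest
open set in which the image of the cylinder of `s` is everywhere non-meagre. The union over `n` of
the sets `U (n :: s)` is dense in `U s`, so a generic point lies in `U s` for all `s` along some
branch, and by continuity it is the value of `f` at that branch. -/
theorem analytic_residual_or {Z : Type*} [TopologicalSpace Z] [SecondCountableTopology Z]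
    [T2Space Z] {A : Set Z} (hA : MeasureTheory.AnalyticSet A) :
    A ∈ residual Z ∨ ∃ V : Set Z, IsOpen V ∧ V.Nonempty ∧ IsMeagre (A ∩ V) := by
  by_contra! hcon
  obtain ⟨hres, hV⟩ := hcon
  apply hres
  rw [MeasureTheory.AnalyticSet] at hA
  rcases hA with rfl | ⟨f, hf, rfl⟩
  · by_cases hZ : Nonempty Z
    · exact absurd (by simpa using IsMeagre.empty) (hV univ isOpen_univ univ_nonempty)
    · rw [not_nonempty_iff] at hZ
      rw [Subsingleton.elim (∅ : Set Z) univ]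
      exact univ_mem
  let N : List ℕ → Set (ℕ → ℕ) := fun s => {x | res x s.length = s}
  let U : List ℕ → Set Z := fun s => ⋃₀ {V | IsOpen V ∧
    ∀ V' ⊆ V, IsOpen V' → V'.Nonempty → ¬ IsMeagre (f '' N s ∩ V')}
  have hUo : ∀ s, IsOpen (U s) := fun s => isOpen_sUnion fun V hV => hV.1
  have hUnm : ∀ s, ∀ V ⊆ U s, IsOpen V → V.Nonempty → ¬ IsMeagre (f '' N s ∩ V) := by
    rintro s V hVU hVo ⟨x, hx⟩ hm
    obtain ⟨V₀, ⟨hV₀, h⟩, hx₀⟩ := hVU hx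
    exact h (V ∩ V₀) inter_subset_right (hVo.inter hV₀) ⟨x, hx, hx₀⟩
      (hm.mono (inter_subset_inter_right _ inter_subset_left))
  -- A set which is non-meagre in `W` is everywhere non-meagre in some open part of `W`.
  have hloc : ∀ s, ∀ W, IsOpen W → ¬ IsMeagre (f '' N s ∩ W) → (W ∩ U s).Nonempty := by
    intro s W hW hnm
    by_contra! hemp
    apply hnm
    let B := TopologicalSpace.countableBasis Z
    let C := {V ∈ B | IsMeagre (f '' N s ∩ V)}
    have hC : C.Countable := (TopologicalSpace.countable_countableBasis Z).mono (sep_subset _ _)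
    have hm1 : IsMeagre (⋃ V ∈ C, f '' N s ∩ V) := isMeagre_biUnion hC fun V hV => hV.2
    have hCo : IsOpen (⋃₀ C) := isOpen_sUnion fun V hV =>
      TopologicalSpace.isOpen_of_mem_countableBasis hV.1
    have hdense : W ⊆ closure (⋃₀ C) := by
      intro x hx
      rw [mem_closure_iff]
      intro O hO hxO
      have hxU : x ∉ U s := fun h => (hemp ▸ (⟨hx, h⟩ : x ∈ W ∩ U s) : x ∈ (∅ : Set Z))
      have h1 : ¬ ∀ V' ⊆ O, IsOpen V' → V'.Nonempty → ¬ IsMeagre (f '' N s ∩ V') :=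
        fun h => hxU ⟨O, ⟨hO, h⟩, hxO⟩
      push Not at h1
      obtain ⟨V', hV'O, hV'o, ⟨y, hy⟩, hV'm⟩ := h1
      obtain ⟨V, hVB, hyV, hVV'⟩ :=
        (TopologicalSpace.isBasis_countableBasis Z).exists_subset_of_mem_open hy hV'o
      exact ⟨y, hV'O hy, V, ⟨hVB, hV'm.mono (inter_subset_inter_right _ hVV')⟩, hyV⟩
    have hm2 : IsMeagre (closure (⋃₀ C) \ ⋃₀ C) := by
      have : frontier (⋃₀ C) = closure (⋃₀ C) \ ⋃₀ C := by rw [hCo.frontier_eq]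
      rw [← this]
      exact (IsNowhereDense.isMeagre (by
        rw [isClosed_frontier.isNowhereDense_iff]
        rw [← frontier_compl]
        exact interior_frontier hCo.isClosed_compl))
    refine (hm1.union hm2).mono ?_
    rintro x ⟨hxs, hxW⟩
    by_cases hx : x ∈ ⋃₀ C
    · obtain ⟨V, hV, hxV⟩ := hx
      exact Or.inl (mem_biUnion hV ⟨hxs, hxV⟩)
    · exact Or.inr ⟨hdense hxW, hx⟩
  have hNsplit : ∀ s, N s ⊆ ⋃ n, N (n :: s) := by
    intro s x hx
    have hx : res x s.length = s := hx
    refine mem_iUnion.2 ⟨x s.length, ?_⟩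
    show res x (s.length + 1) = _
    rw [res_succ, hx]
  let G : List ℕ → Set Z := fun s => (⋃ n, U (n :: s)) ∪ (closure (U s))ᶜ
  have hG : ∀ s, G s ∈ residual Z := by
    intro s
    refine residual_of_dense_open
      ((isOpen_iUnion fun n => hUo _).union isClosed_closure.isOpen_compl) ?_
    intro x
    rw [mem_closure_iff]
    intro O hO hxO
    by_cases hx : x ∈ closure (U s)
    · obtain ⟨y, hyO, hyU⟩ := mem_closure_iff.1 hx O hO hxO
      have h1 := hUnm s (O ∩ U s) inter_subset_right (hO.inter (hUo s)) ⟨y, hyO, hyU⟩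
      have h2 : ∃ n, ¬ IsMeagre (f '' N (n :: s) ∩ (O ∩ U s)) := by
        by_contra! h
        apply h1
        refine (isMeagre_iUnion h).mono ?_
        rintro _ ⟨⟨z, hz, rfl⟩, hz'⟩
        obtain ⟨n, hn⟩ := mem_iUnion.1 (hNsplit s hz)
        exact mem_iUnion.2 ⟨n, ⟨z, hn, rfl⟩, hz'⟩
      obtain ⟨n, hn⟩ := h2
      obtain ⟨z, ⟨hzO, -⟩, hzU⟩ := hloc _ _ (hO.inter (hUo s)) hn
      exact ⟨z, hzO, Or.inl (mem_iUnion.2 ⟨n, hzU⟩)⟩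
    · exact ⟨x, hxO, Or.inr hx⟩
  refine mem_of_superset (countable_iInter_mem.2 hG) ?_
  intro x hx
  have hstep : ∀ s, ∃ n, x ∈ U s → x ∈ U (n :: s) := by
    intro s
    rcases mem_iInter.1 hx s with h | h
    · obtain ⟨n, hn⟩ := mem_iUnion.1 h
      exact ⟨n, fun _ => hn⟩
    · exact ⟨0, fun h' => absurd (subset_closure h') h⟩
  choose next hnext using hstep
  let L : ℕ → List ℕ := fun k => Nat.rec [] (fun _ l => next l :: l) k
  have hLs : ∀ k, L (k + 1) = next (L k) :: L k := fun k => rfl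
  have hLU : ∀ k, x ∈ U (L k) := by
    intro k
    induction k with
    | zero =>
      refine ⟨univ, ⟨isOpen_univ, fun V _ hVo hVne => ?_⟩, mem_univ x⟩
      have : N (L 0) = univ := eq_univ_of_forall fun y => rfl
      rw [this, image_univ]
      exact hV V hVo hVne
    | succ k ih => exact hnext _ ih
  let α : ℕ → ℕ := fun k => next (L k)
  have hα : ∀ k, res α k = L k := by
    intro k
    induction k with
    | zero => rfl
    | succ k ih => rw [res_succ, ih]
  refine ⟨α, ?_⟩
  by_contra hne
  obtain ⟨O₁, O₂, hO₁, hO₂, h1, h2, hd⟩ := t2_separation hne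
  obtain ⟨k, hk⟩ : ∃ k, cylinder α k ⊆ f ⁻¹' O₁ := by
    have := (isTopologicalBasis_cylinders (fun _ : ℕ => ℕ)).mem_nhds_iff.1
      ((hO₁.preimage hf).mem_nhds h1)
    obtain ⟨_, ⟨β, k, rfl⟩, hαβ, hsub⟩ := this
    exact ⟨k, by rwa [mem_cylinder_iff_eq.1 hαβ]⟩
  have h3 := hUnm (L k) (O₂ ∩ U (L k)) inter_subset_right (hO₂.inter (hUo _)) ⟨x, h2, hLU k⟩
  obtain ⟨_, ⟨y, hy, rfl⟩, hy2, -⟩ := nonempty_of_not_isMeagre h3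
  have hy1 : y ∈ cylinder α k := by
    have hy : res y (L k).length = L k := hy
    rw [cylinder_eq_res]
    have hlen : (L k).length = k := by rw [← hα, res_length]
    rw [hlen] at hy
    rw [mem_ofPred_eq, hy, hα]
  exact hd.le_bot ⟨hk hy1, hy2⟩

/-- The Kuratowski–Ulam theorem, for comeagre sets: almost all sections are comeagre. -/
theorem residual_sections {X Y : Type*} [TopologicalSpace X] [TopologicalSpace Y]
    [SecondCountableTopology Y] {A : Set (X × Y)} (hA : A ∈ residual (X × Y)) :
    {x | {y | (x, y) ∈ A} ∈ residual Y} ∈ residual X := by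
  obtain ⟨S, hSo, hSd, hSc, hSA⟩ := mem_residual_iff.1 hA
  have key : ∀ U ∈ S, {x | {y | (x, y) ∈ U} ∈ residual Y} ∈ residual X := by
    intro U hU
    have h1 : ∀ O ∈ TopologicalSpace.countableBasis Y,
        {x | ∃ y ∈ O, (x, y) ∈ U} ∈ residual X := by
      intro O hO
      have hOo := TopologicalSpace.isOpen_of_mem_countableBasis hO
      refine residual_of_dense_open ?_ ?_
      · have : {x | ∃ y ∈ O, (x, y) ∈ U} = Prod.fst '' (U ∩ Prod.snd ⁻¹' O) := by
          ext x; simp [and_comm]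
        rw [this]
        exact isOpenMap_fst _ ((hSo U hU).inter (hOo.preimage continuous_snd))
      · intro x
        rw [mem_closure_iff]
        intro V hV hxV
        obtain ⟨y, hy⟩ := TopologicalSpace.nonempty_of_mem_countableBasis hO
        obtain ⟨⟨a, b⟩, ⟨ha, hb⟩, hab⟩ := (hSd U hU).inter_open_nonempty _ (hV.prod hOo)
          ⟨(x, y), hxV, hy⟩
        exact ⟨a, ha, b, hb, hab⟩
    refine mem_of_superset ((countable_bInter_mem
      (TopologicalSpace.countable_countableBasis Y)).2 h1) ?_
    intro x hx
    refine residual_of_dense_open ((hSo U hU).preimage (by fun_prop)) ?_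
    intro y
    rw [mem_closure_iff]
    intro O hO hyO
    obtain ⟨V, hVB, hyV, hVO⟩ :=
      (TopologicalSpace.isBasis_countableBasis Y).exists_subset_of_mem_open hyO hO
    obtain ⟨z, hz, hzU⟩ := mem_iInter₂.1 hx V hVB
    exact ⟨z, hVO hz, hzU⟩
  refine mem_of_superset ((countable_bInter_mem hSc).2 key) ?_
  intro x hx
  have hx' : ∀ U ∈ S, {y | (x, y) ∈ U} ∈ residual Y := fun U hU => mem_iInter₂.1 hx U hU
  have h := (countable_bInter_mem (l := residual Y) (s := fun U _ => {y | (x, y) ∈ U}) hSc).2 hx'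
  refine mem_of_superset h ?_
  intro y hy
  exact hSA (mem_sInter.2 fun U hU => mem_iInter₂.1 hy U hU)

/-! ### Limits of schemes of points -/

/-- If `φ n` assigns points to the words of length `n` and the closed balls of radius `ε n` around
them are nested along the binary tree, then the points converge along every branch, to a
continuous function of the branch. -/
theorem fusion {M : Type*} [MetricSpace M] [CompleteSpace M] (φ : ℕ → List Bool → M)
    (ε : ℕ → ℝ) (hε : Tendsto ε atTop (𝓝 0))
    (h : ∀ n v i, v.length = n → dist (φ (n + 1) (i :: v)) (φ n v) + ε (n + 1) ≤ ε n)
    (hpos : ∀ n, 0 ≤ ε n) :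
    ∃ f : (ℕ → Bool) → M, Continuous f ∧
      (∀ x, Tendsto (fun n => φ n (res x n)) atTop (𝓝 (f x))) ∧
      ∀ x n, dist (f x) (φ n (res x n)) ≤ ε n := by
  have hd : ∀ x n k, dist (φ (n + k) (res x (n + k))) (φ n (res x n)) + ε (n + k) ≤ ε n := by
    intro x n k
    induction k with
    | zero => simp
    | succ k ih =>
      have h1 := h (n + k) (res x (n + k)) (x (n + k)) (res_length _ _)
      have h2 := dist_triangle (φ (n + k + 1) (x (n + k) :: res x (n + k)))
        (φ (n + k) (res x (n + k))) (φ n (res x n))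
      rw [← add_assoc, res_succ]
      linarith
  have hd' : ∀ x n m, n ≤ m → dist (φ m (res x m)) (φ n (res x n)) ≤ ε n := by
    intro x n m hnm
    obtain ⟨k, rfl⟩ := Nat.exists_eq_add_of_le hnm
    linarith [hd x n k, hpos (n + k)]
  have hc : ∀ x, ∃ y, Tendsto (fun n => φ n (res x n)) atTop (𝓝 y) := by
    intro x
    refine cauchySeq_tendsto_of_complete (cauchySeq_of_le_tendsto_0 (fun n => ε n + ε n)
      (fun n m N hn hm => ?_) (by simpa using hε.add hε))
    have := dist_triangle_right (φ n (res x n)) (φ m (res x m)) (φ N (res x N))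
    linarith [hd' x N n hn, hd' x N m hm]
  choose f hf using hc
  have hfd : ∀ x n, dist (f x) (φ n (res x n)) ≤ ε n := fun x n =>
    le_of_tendsto ((hf x).dist tendsto_const_nhds)
      (eventually_atTop.2 ⟨n, fun m hm => hd' x n m hm⟩)
  refine ⟨f, ?_, hf, hfd⟩
  rw [continuous_iff_continuousAt]
  intro x
  rw [ContinuousAt, Metric.tendsto_nhds]
  intro δ hδ
  obtain ⟨n, hn⟩ := ((hε.add hε).eventually_lt_const (by simpa using hδ)).exists
  have hcyl : cylinder x n ∈ 𝓝 x :=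
    (isOpen_cylinder (fun _ : ℕ => Bool) x n).mem_nhds (self_mem_cylinder x n)
  filter_upwards [hcyl] with y hy
  rw [cylinder_eq_res] at hy
  have hy : res y n = res x n := hy
  have h1 := hfd y n
  rw [hy] at h1
  linarith [dist_triangle_right (f y) (f x) (φ n (res x n)), hfd x n]

/-! ### Mycielski's theorem -/

/-- Mycielski's theorem: for a comeagre `A ⊆ Z × Z` there is a Cantor scheme in `Z` any two
distinct branches of which form a pair in `A`. -/
theorem mycielski {Z : Type*} [MetricSpace Z] [CompleteSpace Z] [Nonempty Z] {A : Set (Z × Z)}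
    (hA : A ∈ residual (Z × Z)) :
    ∃ f : (ℕ → Bool) → Z, Continuous f ∧ ∀ x y, x ≠ y → (f x, f y) ∈ A := by
  obtain ⟨S, hSo, hSd, hSc, hSA⟩ := mem_residual_iff.1 hA
  -- Adjoining `univ` makes the family nonempty, so that it can be enumerated.
  obtain ⟨U, hU⟩ := (hSc.insert univ).exists_eq_range (insert_nonempty _ _)
  have hUo : ∀ m, IsOpen (U m) ∧ Dense (U m) := by
    intro m
    have : U m ∈ insert univ S := hU ▸ mem_range_self m
    rcases this with h | h
    · rw [h]; exact ⟨isOpen_univ, dense_univ⟩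
    · exact ⟨hSo _ h, hSd _ h⟩
  have hUA : ∀ p, (∀ m, p ∈ U m) → p ∈ A := by
    intro p hp
    refine hSA (mem_sInter.2 fun V hV => ?_)
    obtain ⟨m, rfl⟩ : V ∈ range U := hU ▸ mem_insert_of_mem _ hV
    exact hp m
  -- The generic family of points indexed by finite binary sequences is pairwise in `A`.
  have hR : Dense {w : List Bool → Z | ∀ u v, u ≠ v → ∀ m, (w u, w v) ∈ U m} := by
    apply dense_of_mem_residual
    have h1 : ∀ u v, ∀ m, {w : List Bool → Z | u ≠ v → (w u, w v) ∈ U m} ∈ residual _ := by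
      intro u v m
      by_cases huv : u = v
      · simp [huv]
      refine mem_of_superset (residual_of_dense_open
        ((hUo m).1.preimage (f := fun w : List Bool → Z => (w u, w v)) (by fun_prop)) ?_)
        fun w hw _ => hw
      intro w
      let g : Z × Z → List Bool → Z := fun p => Function.update (Function.update w u p.1) v p.2
      have hg : Continuous g := by fun_prop
      have hgw : g (w u, w v) = w := by simp [g]
      rw [← hgw]
      refine map_mem_closure hg ((hUo m).2 (w u, w v)) ?_
      rintro ⟨a, b⟩ hab
      simpa [g, Function.update_of_ne huv] using hab
    have h2 := countable_iInter_mem.2 fun u => countable_iInter_mem.2 fun v =>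
      countable_iInter_mem.2 fun m => h1 u v m
    filter_upwards [h2] with w hw u v huv m
    simp only [mem_iInter] at hw
    exact hw u v m huv
  -- One level of the scheme: the point at `v` is split into two nearby points, and the radius
  -- shrinks so that any two distinct closed balls have their product inside `U m` for `m ≤ n`.
  have hstep : ∀ (n : ℕ) (p : {p : (List Bool → Z) × ℝ // 0 < p.2}),
      ∃ q : {p : (List Bool → Z) × ℝ // 0 < p.2}, q.1.2 ≤ p.1.2 / 2 ∧
        (∀ v i, v.length = n → dist (q.1.1 (i :: v)) (p.1.1 v) ≤ p.1.2 / 2) ∧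
        ∀ u ∈ {l : List Bool | l.length = n + 1}, ∀ v ∈ {l : List Bool | l.length = n + 1},
          ∀ m ∈ Iic n, u ≠ v →
          ∀ a b, dist a (q.1.1 u) ≤ q.1.2 → dist b (q.1.1 v) ≤ q.1.2 → (a, b) ∈ U m := by
    rintro n ⟨⟨w, ε⟩, hε⟩
    have hε : 0 < ε := hε
    have hfin : ∀ n, {l : List Bool | l.length = n}.Finite := fun n => List.finite_length_eq Bool n
    have hO : IsOpen {w' : List Bool → Z | ∀ l ∈ {l : List Bool | l.length = n + 1},
        dist (w' l) (w l.tail) < ε / 2} := by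
      simp only [ofPred_forall]
      exact (hfin _).isOpen_biInter fun l _ => isOpen_lt (by fun_prop) (by fun_prop)
    obtain ⟨w', hw'O, hw'R⟩ := hR.inter_open_nonempty _ hO
      ⟨fun l => w l.tail, fun l _ => by simpa using hε⟩
    have hev : ∀ᶠ δ : ℝ in 𝓝[>] 0,
        ∀ u ∈ {l : List Bool | l.length = n + 1}, ∀ v ∈ {l : List Bool | l.length = n + 1},
          ∀ m ∈ Iic n, u ≠ v →
          ∀ a b, dist a (w' u) ≤ δ → dist b (w' v) ≤ δ → (a, b) ∈ U m := by
      refine (eventually_all_finite (hfin _)).2 fun u _ =>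
        (eventually_all_finite (hfin _)).2 fun v _ =>
        (eventually_all_finite (finite_Iic n)).2 fun m _ => ?_
      by_cases huv : u = v
      · simp [huv]
      obtain ⟨r, hr, hball⟩ := Metric.isOpen_iff.1 (hUo m).1 _ (hw'R u v huv m)
      have : Iio r ∈ 𝓝[>] (0 : ℝ) := mem_nhdsWithin_of_mem_nhds (Iio_mem_nhds hr)
      filter_upwards [this] with δ hδ _ a b ha hb
      apply hball
      rw [Metric.mem_ball, Prod.dist_eq]
      exact max_lt (ha.trans_lt hδ) (hb.trans_lt hδ)
    have hsmall : Ioc 0 (ε / 2) ∈ 𝓝[>] (0 : ℝ) := Ioc_mem_nhdsGT (by positivity)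
    obtain ⟨δ, hδ, hδ0, hδε⟩ := (hev.and hsmall).exists
    exact ⟨⟨⟨w', δ⟩, hδ0⟩, hδε, fun v i hv => (hw'O (i :: v) (by simp [hv])).le, hδ⟩
  choose next hn1 hn2 hn3 using hstep
  let z : Z := Classical.arbitrary Z
  let c : ℕ → {p : (List Bool → Z) × ℝ // 0 < p.2} := fun n =>
    Nat.rec ⟨(fun _ => z, 1), one_pos⟩ (fun n p => next n p) n
  have hc : ∀ n, c (n + 1) = next n (c n) := fun n => rfl
  have hhalf : ∀ n, (c n).1.2 ≤ (1 / 2) ^ n := by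
    intro n
    induction n with
    | zero => simp [c]
    | succ n ih => rw [hc, pow_succ]; linarith [hn1 n (c n)]
  obtain ⟨f, hf, -, hfd⟩ := fusion (fun n => (c n).1.1) (fun n => (c n).1.2)
    (squeeze_zero (fun n => (c n).2.le) hhalf
      (tendsto_pow_atTop_nhds_zero_of_lt_one (by norm_num) (by norm_num)))
    (fun n v i hv => by
      have h1 := hn1 n (c n)
      have h2 := hn2 n (c n) v i hv
      simp only [hc]
      linarith)
    (fun n => (c n).2.le)
  refine ⟨f, hf, fun x y hxy => hUA _ fun m => ?_⟩
  obtain ⟨k, hk⟩ : ∃ k, x k ≠ y k := Function.ne_iff.1 hxy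
  let n := max k m
  have hne : res x (n + 1) ≠ res y (n + 1) := fun h =>
    hk (res_eq_res.1 h (Nat.lt_succ_of_le (le_max_left k m)))
  exact hn3 n (c n) _ (res_length x (n + 1)) _ (res_length y (n + 1)) m (le_max_right k m) hne _ _
    (hfd x (n + 1)) (hfd y (n + 1))

/-! ### The homomorphism from `G₀` -/

/-- The configurations of level `n`: points `w.1 v` of `X` for words `v` of length `n`, and witnesses
`w.2 t` for words `t` of length less than `n`. With `k = n - 1 - t.length`, the word `t` indexes
the edge between the two words of length `n` which begin with `s k`, have `false` and `true`
respectively at place `k`, and end with `t`; its witness is mapped by `g` to the pair of points at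
the ends of the edge. The values at words of other lengths are unconstrained. -/
def Config {X Z : Type*} (g : Z → X × X) (s : ℕ → List Bool) (n : ℕ) :
    Set ((List Bool → X) × (List Bool → Z)) :=
  {w | ∀ t : List Bool, t.length < n →
    g (w.2 t) = (w.1 (t ++ false :: s (n - 1 - t.length)), w.1 (t ++ true :: s (n - 1 - t.length)))}

/-- The configurations of level `n` all of whose points lie in `Y`. -/
def ConfigIn {X Z : Type*} (g : Z → X × X) (s : ℕ → List Bool) (Y : Set X) (n : ℕ) :
    Set ((List Bool → X) × (List Bool → Z)) :=
  {w ∈ Config g s n | ∀ v : List Bool, v.length = n → w.1 v ∈ Y}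

/-- Two configurations of level `n` are joined to one of level `n + 1` by a witness `z` for a new
edge between their vertices at `s n`. -/
theorem merge {X Z : Type*} {g : Z → X × X} {s : ℕ → List Bool} {Y : Set X} {n : ℕ}
    {w : Bool → (List Bool → X) × (List Bool → Z)} (hw : ∀ i, w i ∈ ConfigIn g s Y n) {z : Z}
    (hz : g z = ((w false).1 (s n), (w true).1 (s n))) :
    ∃ w' ∈ ConfigIn g s Y (n + 1),
      ∀ i v, w'.1 (i :: v) = (w i).1 v ∧ w'.2 (i :: v) = (w i).2 v := by
  refine ⟨⟨fun l => match l with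
      | [] => (w false).1 []
      | i :: v => (w i).1 v,
    fun l => match l with
      | [] => z
      | i :: v => (w i).2 v⟩, ⟨?_, ?_⟩, fun i v => ⟨rfl, rfl⟩⟩
  · rintro (_ | ⟨i, t⟩) ht
    · simpa using hz
    · have ht' : t.length < n := by simpa using ht
      have := (hw i).1 t ht'
      have e : n + 1 - 1 - (i :: t).length = n - 1 - t.length := by
        simp only [List.length_cons]; omega
      rw [e]
      exact this
  · rintro (_ | ⟨i, t⟩) ht
    · simp at ht
    · exact (hw i).2 t (by simpa using ht)

/-- One direction of the `G₀`-dichotomy for the graph `Eᶜ`: if `E` has uncountably many classes, there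
is a continuous map on `2^ℕ` sending each edge of `G₀` to an `E`-inequivalent pair. -/
theorem exists_homomorphism {X Z : Type*} [MetricSpace X] [CompleteSpace X]
    [SecondCountableTopology X] [MetricSpace Z] [CompleteSpace Z] [SecondCountableTopology Z]
    (E : X → X → Prop) (hE : Equivalence E) (g : Z → X × X) (hg : Continuous g)
    (hrange : range g = {p : X × X | ¬ E p.1 p.2})
    (hunc : ¬ {C : Set X | ∃ x : X, C = {y : X | E x y}}.Countable)
    (s : ℕ → List Bool) (hs : ∀ k, (s k).length = k) :
    ∃ φ : (ℕ → Bool) → X, Continuous φ ∧ ∀ x y k, res x k = s k → res y k = s k →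
      x k = false → y k = true → (∀ j, k < j → x j = y j) → ¬ E (φ x) (φ y) := by
  let W := (List Bool → X) × (List Bool → Z)
  let cls : X → Set X := fun x => {y | E x y}
  have hcls : ∀ {x y}, cls x = cls y → E x y := by
    intro x y h
    have : y ∈ cls y := hE.refl y
    rwa [← h] at this
  -- The `σ`-ideal of sets that meet only countably many classes.
  let I : Set X → Prop := fun A => (cls '' A).Countable
  have hImono : ∀ {A B : Set X}, A ⊆ B → I B → I A := fun hAB hB => hB.mono (image_mono hAB)
  have hIuniv : ¬ I univ := by
    intro h
    apply hunc
    refine h.mono ?_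
    rintro _ ⟨x, rfl⟩
    exact ⟨x, mem_univ x, rfl⟩
  have hIE : ∀ A, ¬ I A → ∃ x ∈ A, ∃ y ∈ A, ¬ E x y := by
    intro A hA
    by_contra! h
    apply hA
    refine Set.Subsingleton.countable ?_
    rintro _ ⟨x, hx, rfl⟩ _ ⟨y, hy, rfl⟩
    ext a
    exact ⟨fun ha => hE.trans (hE.symm (h x hx y hy)) ha, fun ha => hE.trans (h x hx y hy) ha⟩
  -- The possible values at the vertex `s n` of configurations in `O` with points in `Y`.
  let T : ℕ → Set W → Set X → Set X := fun n O Y =>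
    (fun w : W => w.1 (s n)) '' (ConfigIn g s Y n ∩ O)
  have hTmono : ∀ {n O O' Y Y'}, O ⊆ O' → Y ⊆ Y' → T n O Y ⊆ T n O' Y' := by
    rintro n O O' Y Y' hO hY _ ⟨w, ⟨hw, hwO⟩, rfl⟩
    exact ⟨w, ⟨⟨hw.1, fun v hv => hY (hw.2 v hv)⟩, hO hwO⟩, rfl⟩
  let B := TopologicalSpace.countableBasis W
  have hB : Countable B := (TopologicalSpace.countable_countableBasis W).to_subtype
  -- For each of the countably many pairs of a level and a basic open set, if some set with small
  -- complement kills all configurations there, choose one; `Y` is the intersection of the choices.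
  have hpick : ∀ i : ℕ × B, ∃ Y : Set X, I Yᶜ ∧
      ((∃ Y', I Y'ᶜ ∧ T i.1 i.2 Y' = ∅) → T i.1 i.2 Y = ∅) := by
    intro i
    by_cases h : ∃ Y', I Y'ᶜ ∧ T i.1 i.2 Y' = ∅
    · obtain ⟨Y', h1, h2⟩ := h
      exact ⟨Y', h1, fun _ => h2⟩
    · exact ⟨univ, by simp [I], fun h' => absurd h' h⟩
  choose Yi hYi1 hYi2 using hpick
  let Y : Set X := ⋂ i, Yi i
  have hYI : I Yᶜ := by
    show (cls '' Yᶜ).Countable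
    rw [compl_iInter, image_iUnion]
    exact countable_iUnion hYi1
  -- If `T n O Y` is small, then removing it from `Y` kills all configurations in `O`, so by the
  -- choice of `Y` there were none.
  have hbasic : ∀ n, ∀ O ∈ B, I (T n O Y) → T n O Y = ∅ := by
    intro n O hO hI
    have h1 : ∃ Y', I Y'ᶜ ∧ T n O Y' = ∅ := by
      refine ⟨Y \ T n O Y, ?_, ?_⟩
      · show (cls '' _).Countable
        rw [sdiff_eq, compl_inter, compl_compl, image_union]
        exact hYI.union hI
      · rw [eq_empty_iff_forall_notMem]
        rintro _ ⟨w, hw, rfl⟩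
        exact (hw.1.2 (s n) (hs n)).2
          (hTmono subset_rfl sdiff_subset ⟨w, hw, rfl⟩)
    have h2 := hYi2 ⟨n, O, hO⟩ h1
    exact subset_empty_iff.1 ((hTmono subset_rfl (iInter_subset _ _)).trans h2.le)
  have hbig : ∀ n, ∀ w ∈ ConfigIn g s Y n, ∀ O, IsOpen O → w ∈ O → ¬ I (T n O Y) := by
    intro n w hw O hO hwO hI
    obtain ⟨V, hVB, hwV, hVO⟩ :=
      (TopologicalSpace.isBasis_countableBasis W).exists_subset_of_mem_open hwO hO
    have h1 := hbasic n V hVB (hImono (hTmono hVO subset_rfl) hI)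
    exact (h1 ▸ (⟨w, ⟨hw, hwV⟩, rfl⟩ : w.1 (s n) ∈ T n V Y) : w.1 (s n) ∈ (∅ : Set X))
  have hstep : ∀ n, ∀ w : ConfigIn g s Y n, ∃ w' : ConfigIn g s Y (n + 1),
      (∀ v i, v.length = n → dist (w'.1.1 (i :: v)) (w.1.1 v) < (1 / 2) ^ (n + 1)) ∧
      ∀ t i, t.length < n → dist (w'.1.2 (i :: t)) (w.1.2 t) < (1 / 2) ^ (n + 1) := by
    rintro n ⟨w, hw⟩
    let O : Set W := {w' | (∀ v ∈ {l : List Bool | l.length = n},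
        dist (w'.1 v) (w.1 v) < (1 / 2) ^ (n + 1)) ∧ ∀ t ∈ {l : List Bool | l.length < n},
        dist (w'.2 t) (w.2 t) < (1 / 2) ^ (n + 1)}
    have hc1 : ∀ l, Continuous fun w' : W => w'.1 l := fun l =>
      (continuous_apply l).comp continuous_fst
    have hc2 : ∀ l, Continuous fun w' : W => w'.2 l := fun l =>
      (continuous_apply l).comp continuous_snd
    have hO : IsOpen O := by
      simp only [O, ofPred_and, ofPred_forall]
      exact ((List.finite_length_eq Bool n).isOpen_biInter fun l _ =>
        isOpen_lt ((hc1 l).dist continuous_const) continuous_const).inter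
        ((List.finite_length_lt Bool n).isOpen_biInter fun l _ =>
        isOpen_lt ((hc2 l).dist continuous_const) continuous_const)
    have hwO : w ∈ O := by constructor <;> intro l _ <;> simp
    obtain ⟨_, ⟨w0, ⟨hw0, hO0⟩, rfl⟩, _, ⟨w1, ⟨hw1, hO1⟩, rfl⟩, hne⟩ :=
      hIE _ (hbig n w hw O hO hwO)
    obtain ⟨z, hz⟩ : (w0.1 (s n), w1.1 (s n)) ∈ range g := by rw [hrange]; exact hne
    obtain ⟨w', hw', hm⟩ := merge (w := fun i => cond i w1 w0) (Y := Y)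
      (by rintro (_ | _) <;> assumption) hz
    have hcO : ∀ i, cond i w1 w0 ∈ O := by rintro (_ | _) <;> assumption
    refine ⟨⟨w', hw'⟩, fun v i hv => ?_, fun t i ht => ?_⟩
    · rw [(hm i v).1]; exact (hcO i).1 v hv
    · rw [(hm i t).2]; exact (hcO i).2 t ht
  obtain ⟨y₀, hy₀⟩ : Y.Nonempty := by
    rw [nonempty_iff_ne_empty]
    intro h
    rw [h, compl_empty] at hYI
    exact hIuniv hYI
  obtain ⟨z₀⟩ : Nonempty Z := by
    obtain ⟨x, -, y, -, hxy⟩ := hIE _ hIuniv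
    obtain ⟨z, -⟩ : (x, y) ∈ range g := by rw [hrange]; exact hxy
    exact ⟨z⟩
  choose next hn1 hn2 using hstep
  let c : ∀ n, ConfigIn g s Y n := fun n => Nat.rec
    ⟨(fun _ => y₀, fun _ => z₀), fun t ht => absurd ht (Nat.not_lt_zero _), fun _ _ => hy₀⟩
    (fun n w => next n w) n
  have hpow : Tendsto (fun n : ℕ => ((1 : ℝ) / 2) ^ n) atTop (𝓝 0) :=
    tendsto_pow_atTop_nhds_zero_of_lt_one (by norm_num) (by norm_num)
  obtain ⟨φ, hφ, hlim, -⟩ := fusion (fun n => (c n).1.1) (fun n => (1 / 2) ^ n) hpow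
    (fun n v i hv => by
      have h1 : dist ((c (n + 1)).1.1 (i :: v)) ((c n).1.1 v) < _ := hn1 n (c n) v i hv
      have h2 : ((1 : ℝ) / 2) ^ (n + 1) = (1 / 2) ^ n / 2 := by rw [pow_succ]; ring
      simp only [h2] at h1 ⊢
      linarith) (fun n => by positivity)
  refine ⟨φ, hφ, fun x y k hx hy hxk hyk hxy => ?_⟩
  -- The witnesses of the edge between `x` and `y` converge, and the limit is mapped to
  -- `(φ x, φ y)` by continuity of `g`.
  let t : ℕ → List Bool := fun m => res (fun j => x (k + 1 + j)) m
  have ht : ∀ m, (t m).length = m := fun m => res_length _ m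
  have hres : ∀ m, res x (k + 1 + m) = t m ++ false :: s k ∧
      res y (k + 1 + m) = t m ++ true :: s k := by
    intro m
    induction m with
    | zero => simp [t, hx, hy, hxk, hyk]
    | succ m ih =>
      rw [← add_assoc, res_succ, res_succ, ih.1, ih.2, ← hxy (k + 1 + m) (by omega)]
      exact ⟨rfl, rfl⟩
  have hedge : ∀ m, g ((c (k + 1 + m)).1.2 (t m)) =
      ((c (k + 1 + m)).1.1 (res x (k + 1 + m)), (c (k + 1 + m)).1.1 (res y (k + 1 + m))) := by
    intro m
    have h1 := (c (k + 1 + m)).2.1 (t m) (by rw [ht]; omega)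
    have h2 : k + 1 + m - 1 - (t m).length = k := by rw [ht]; omega
    rw [h2] at h1
    rw [h1, (hres m).1, (hres m).2]
  have hz : ∃ z, Tendsto (fun m => (c (k + 1 + m)).1.2 (t m)) atTop (𝓝 z) := by
    refine cauchySeq_tendsto_of_complete (cauchySeq_of_le_geometric (1 / 2) 1 (by norm_num) ?_)
    intro m
    rw [dist_comm, one_mul]
    have h1 : dist ((c (k + 1 + m + 1)).1.2 (t (m + 1))) ((c (k + 1 + m)).1.2 (t m)) < _ :=
      hn2 (k + 1 + m) (c (k + 1 + m)) (t m) (x (k + 1 + m)) (by rw [ht]; omega)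
    refine h1.le.trans ?_
    exact pow_le_pow_of_le_one (by norm_num) (by norm_num) (by omega)
  obtain ⟨z, hz⟩ := hz
  have hadd : Tendsto (fun m => k + 1 + m) atTop atTop := 
    tendsto_atTop_mono (fun m => Nat.le_add_left m (k + 1)) tendsto_id
  have hl1 := (hg.tendsto z).comp hz
  have hl2 := ((hlim x).comp hadd).prodMk_nhds ((hlim y).comp hadd)
  have heq : g z = (φ x, φ y) := by
    refine tendsto_nhds_unique hl1 (hl2.congr fun m => ?_)
    exact (hedge m).symm
  have : (φ x, φ y) ∈ range g := ⟨z, heq⟩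
  rw [hrange] at this
  exact this

/-! ### The pulled back relation -/

theorem exists_dense_sequence :
    ∃ s : ℕ → List Bool, (∀ k, (s k).length = k) ∧ ∀ u, ∃ k l, s k = l ++ u := by
  let d : ℕ → List Bool := fun k => ((Encodable.decode k.unpair.1 : Option (List Bool))).getD []
  refine ⟨fun k => if (d k).length ≤ k then List.replicate (k - (d k).length) false ++ d k
    else List.replicate k false, fun k => ?_, fun u => ?_⟩
  · dsimp only
    split_ifs with h
    · simp [h]
    · simp
  -- Pairing with the length makes the index at least the length of `u`.
  · let k := Nat.pair (Encodable.encode u) u.length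
    have hd : d k = u := by simp [d, k]
    have hle : u.length ≤ k := Nat.right_le_pair _ _
    exact ⟨k, List.replicate (k - u.length) false, by simp [hd, hle]⟩

theorem exists_res_eq (l : List Bool) : ∃ x : ℕ → Bool, res x l.length = l := by
  induction l with
  | nil => exact ⟨fun _ => false, rfl⟩
  | cons a l ih =>
    obtain ⟨x, hx⟩ := ih
    refine ⟨Function.update x l.length a, ?_⟩
    rw [List.length_cons, res_succ, Function.update_self]
    congr 1
    rw [← hx, res_length, res_eq_res]
    intro m hm
    rw [Function.update_of_ne hm.ne]

theorem res_of_append {x : ℕ → Bool} {u : List Bool} (l : List Bool) :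
    ∀ k, res x k = l ++ u → res x u.length = u := by
  induction l with
  | nil =>
    intro k h
    have : k = u.length := by rw [← res_length x k, h, List.nil_append]
    rw [← this, h, List.nil_append]
  | cons a l ih =>
    intro k h
    cases k with
    | zero => simp at h
    | succ k =>
      rw [res_succ, List.cons_append] at h
      exact ih k (List.cons.inj h).2

/-- If `φ` sends `G₀`-edges to inequivalent pairs, then `φ x` and `φ y` are inequivalent for
comeagre many pairs `(x, y)`. -/
theorem residual_of_homomorphism {X : Type*} [TopologicalSpace X] [T2Space X]
    (E : X → X → Prop) (hE : Equivalence E)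
    (hco : MeasureTheory.AnalyticSet {p : X × X | ¬ E p.1 p.2})
    {s : ℕ → List Bool} (hs : ∀ k, (s k).length = k) (hsd : ∀ u, ∃ k l, s k = l ++ u)
    {φ : (ℕ → Bool) → X} (hφ : Continuous φ)
    (hhom : ∀ x y k, res x k = s k → res y k = s k →
      x k = false → y k = true → (∀ j, k < j → x j = y j) → ¬ E (φ x) (φ y)) :
    {p : (ℕ → Bool) × (ℕ → Bool) | ¬ E (φ p.1) (φ p.2)} ∈ residual _ := by
  have : PolishSpace ((ℕ → Bool) × (ℕ → Bool)) := {}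
  have hA : MeasureTheory.AnalyticSet
      {p : (ℕ → Bool) × (ℕ → Bool) | ¬ E (φ p.1) (φ p.2)} :=
    hco.preimage (f := fun p : (ℕ → Bool) × (ℕ → Bool) => (φ p.1, φ p.2)) (by fun_prop)
  rcases analytic_residual_or hA with h | ⟨V, hVo, ⟨⟨a, b⟩, hab⟩, hm⟩
  · exact h
  exfalso
  obtain ⟨V₁, V₂, hV₁, hV₂, ha, hb, hV⟩ := isOpen_prod_iff.1 hVo a b hab
  obtain ⟨x, hxV, hx⟩ := (dense_of_mem_residual (residual_sections hm)).inter_open_nonempty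
    V₁ hV₁ ⟨a, ha⟩
  have hx : {y | (x, y) ∈ _} ∈ residual (ℕ → Bool) := hx
  have hxE : ∀ y ∈ V₂, (x, y) ∈ ({p | ¬ E (φ p.1) (φ p.2)} ∩ V)ᶜ → E (φ x) (φ y) := by
    intro y hy hxy
    by_contra h
    exact hxy ⟨h, hV ⟨hxV, hy⟩⟩
  obtain ⟨m, hm'⟩ : ∃ m, cylinder b m ⊆ V₂ := by
    obtain ⟨_, ⟨β, m, rfl⟩, hbβ, hsub⟩ :=
      (isTopologicalBasis_cylinders (fun _ : ℕ => Bool)).mem_nhds_iff.1 (hV₂.mem_nhds hb)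
    exact ⟨m, by rwa [mem_cylinder_iff_eq.1 hbβ]⟩
  obtain ⟨k, l, hkl⟩ := hsd (res b m)
  have hsV : ∀ y, res y k = s k → y ∈ V₂ := by
    intro y hy
    apply hm'
    rw [cylinder_eq_res]
    have := res_of_append l k (hy.trans hkl)
    rwa [res_length] at this
  -- The class of `φ x` is comeagre in `V₂`, hence contains a point `y` beginning with `s k`
  -- together with the point obtained from `y` by flipping the coordinate `k`.
  let flip : (ℕ → Bool) → (ℕ → Bool) := fun y => Function.update y k (!(y k))
  have hfc : Continuous flip :=
    continuous_id.update k ((continuous_of_discreteTopology (f := not)).comp (continuous_apply k))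
  have hff : ∀ y, flip (flip y) = y := fun y => by simp [flip]
  let h : (ℕ → Bool) ≃ₜ (ℕ → Bool) := ⟨⟨flip, flip, hff, hff⟩, hfc, hfc⟩
  have hx' := tendsto_residual_of_isOpenMap h.continuous h.isOpenMap hx
  obtain ⟨p, hp⟩ := exists_res_eq (false :: s k)
  obtain ⟨y, hyp, hy, hy'⟩ := (dense_of_mem_residual (inter_mem hx hx')).inter_open_nonempty
    (cylinder p (k + 1)) (isOpen_cylinder (fun _ : ℕ => Bool) p (k + 1)) ⟨p, self_mem_cylinder _ _⟩
  rw [List.length_cons, hs] at hp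
  rw [cylinder_eq_res] at hyp
  have hyp : res y (k + 1) = res p (k + 1) := hyp
  rw [hp, res_succ] at hyp
  obtain ⟨hyk, hys⟩ := List.cons.inj hyp
  have hfs : res (flip y) k = s k := by
    rw [← hys, res_eq_res]
    intro j hj
    simp [flip, Function.update_of_ne hj.ne]
  refine hhom y (flip y) k hys hfs hyk (by simp [flip, hyk])
    (fun j hj => by simp [flip, Function.update_of_ne hj.ne']) ?_
  exact hE.trans (hE.symm (hxE y (hsV y hys) hy)) (hxE (flip y) (hsV _ hfs) hy')

end Silver

/-- **Silver's theorem**: a coanalytic equivalence relation on a Polish space either has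
at most countably many equivalence classes, or admits a nonempty perfect set of pairwise
inequivalent elements. -/
theorem silver_dichotomy {X : Type*} [TopologicalSpace X] [PolishSpace X]
    (E : X → X → Prop) (hE : Equivalence E)
    (hco : MeasureTheory.AnalyticSet {p : X × X | ¬ E p.1 p.2}) :
    {C : Set X | ∃ x : X, C = {y : X | E x y}}.Countable ∨
      ∃ P : Set X, P.Nonempty ∧ Perfect P ∧
        ∀ x ∈ P, ∀ y ∈ P, x ≠ y → ¬ E x y := by
  rw [or_iff_not_imp_left]
  intro hunc
  obtain ⟨s, hs, hsd⟩ := Silver.exists_dense_sequence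
  obtain ⟨Z, _, _, g, hg, hrange⟩ :=
    MeasureTheory.analyticSet_iff_exists_polishSpace_range.1 hco
  let := TopologicalSpace.upgradeIsCompletelyMetrizable X
  let := TopologicalSpace.upgradeIsCompletelyMetrizable Z
  obtain ⟨φ, hφ, hhom⟩ := Silver.exists_homomorphism E hE g hg hrange hunc s hs
  have hres := Silver.residual_of_homomorphism E hE hco hs hsd hφ hhom
  let := TopologicalSpace.upgradeIsCompletelyMetrizable (ℕ → Bool)
  obtain ⟨f, hf, hfA⟩ := Silver.mycielski hres
  have hinj : Function.Injective (φ ∘ f) := by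
    intro x y hxy
    by_contra hne
    have hxy : φ (f x) = φ (f y) := hxy
    have h := hfA x y hne
    simp only [mem_ofPred_eq, hxy] at h
    exact h (hE.refl _)
  have hnc : ¬ (range (φ ∘ f)).Countable := by
    intro h
    have h1 : (univ : Set (ℕ → Bool)).Countable :=
      countable_of_injective_of_countable_image hinj.injOn (by rwa [image_univ])
    have h2 : Uncountable (ℕ → Bool) := by
      rw [← Cardinal.aleph0_lt_mk_iff]
      simp [Cardinal.aleph0_lt_continuum]
    exact not_countable_univ h1
  obtain ⟨P, hP, hPne, hPs⟩ := exists_perfect_nonempty_of_isClosed_of_not_countable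
    (isCompact_range (hφ.comp hf)).isClosed hnc
  refine ⟨P, hPne, hP, fun a ha b hb hab => ?_⟩
  obtain ⟨x, rfl⟩ := hPs ha
  obtain ⟨y, rfl⟩ := hPs hb
  exact hfA x y fun h => hab (by rw [h])
end

section
/- The set of continuous functions f : [0,1] → ℝ that are nowhere differentiable — i.e., for every x in [0,1], f is not differentiable at x (within [0,1]) — is residual (comeager) in the space C([0,1], ℝ) equipped with the topology of uniform convergence. -/
/-!
Call `f` *`n`-calm* if some `x ∈ [0,1]` satisfies `|f y - f x| ≤ n * |y - x|` for all `y ∈ [0,1]`.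
A function differentiable at `x` has bounded difference quotients based at `x`: near `x` by
differentiability, away from `x` because `f` is bounded (`exists_mem_calm_of_differentiable`).
Hence every somewhere differentiable function is `n`-calm for some natural number `n`, and it
suffices that the `n`-calm functions form a closed set with dense complement.

Closedness (`isClosed_calm`) holds because the set is the projection along the compact factor
`[0,1]` of a closed set of pairs `(f, x)`. For density (`dense_compl_calm`), approximate `f` by a
polynomial `p` and add `δ * cos (N * π * x)` with `N` large: between consecutive multiples of `1/N`
the cosine moves from `±1` to `∓1`, so every `x` has a point within distance `1/N` at which the
perturbation changes by at least `δ`, while `p` is Lipschitz.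
-/

/-- The functions on `[0,1]` that satisfy a Lipschitz bound with constant `n` based at some single
point `x`, the other point ranging over all of `[0,1]`. -/
def calm (n : ℕ) : Set C(Set.Icc (0:ℝ) 1, ℝ) :=
  {f | ∃ x, ∀ y, |f y - f x| ≤ n * |(y : ℝ) - x|}

lemma isClosed_calm (n : ℕ) : IsClosed (calm n) := by
  have hK : IsClosed {q : C(Set.Icc (0:ℝ) 1, ℝ) × Set.Icc (0:ℝ) 1 |
      ∀ y, |q.1 y - q.1 q.2| ≤ n * |(y : ℝ) - q.2|} := by
    simp only [Set.ofPred_forall]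
    exact isClosed_iInter fun y => isClosed_le (by fun_prop) (by fun_prop)
  convert isClosedMap_fst_of_compactSpace _ hK using 1
  ext f
  simp [calm]

lemma exists_mem_calm_of_differentiable (f : C(Set.Icc (0:ℝ) 1, ℝ)) (x : Set.Icc (0:ℝ) 1)
    (h : DifferentiableWithinAt ℝ (fun t : ℝ => f (Set.projIcc 0 1 zero_le_one t))
      (Set.Icc (0:ℝ) 1) (x : ℝ)) : ∃ n, f ∈ calm n := by
  obtain ⟨C, hC⟩ := h.isBigO_sub.bound
  rw [Filter.Eventually, Metric.mem_nhdsWithin_iff] at hC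
  obtain ⟨r, hr, hC⟩ := hC
  obtain ⟨n, hn⟩ := exists_nat_ge (max C (2 * ‖f‖ / r))
  refine ⟨n, x, fun y => ?_⟩
  rcases lt_or_ge |(y : ℝ) - x| r with hy | hy
  · have := hC ⟨by simpa [Real.dist_eq] using hy, y.2⟩
    simp only [Set.mem_ofPred_eq, Set.projIcc_val, Real.norm_eq_abs] at this
    exact this.trans (mul_le_mul_of_nonneg_right ((le_max_left _ _).trans hn) (abs_nonneg _))
  · have h1 : |f y - f x| ≤ 2 * ‖f‖ := by
      have h2 := f.norm_coe_le_norm y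
      have h3 := f.norm_coe_le_norm x
      rw [Real.norm_eq_abs] at h2 h3
      linarith [abs_sub (f y) (f x)]
    have h2 : 2 * ‖f‖ ≤ n * r := (div_le_iff₀ hr).1 ((le_max_right _ _).trans hn)
    exact h1.trans (h2.trans (by gcongr))

/-- Every point of `[0,1]` lies in one of the `N` closed intervals of length `1/N`; the right
endpoint `1` belongs to the last one. -/
lemma exists_grid_interval {N : ℕ} (hN : 0 < N) {x : ℝ} (hx : x ∈ Set.Icc (0:ℝ) 1) :
    ∃ k : ℕ, k + 1 ≤ N ∧ (k : ℝ) ≤ N * x ∧ N * x ≤ k + 1 := by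
  have hN' : (0:ℝ) < N := by exact_mod_cast hN
  rcases hx.2.lt_or_eq with h | rfl
  · have h0 : 0 ≤ N * x := mul_nonneg hN'.le hx.1
    refine ⟨⌊N * x⌋₊, ?_, Nat.floor_le h0, (Nat.lt_floor_add_one _).le⟩
    exact (Nat.floor_lt h0).2 (by nlinarith)
  · refine ⟨N - 1, by omega, ?_, ?_⟩ <;> rw [Nat.cast_sub hN] <;> simp

lemma exists_cos_sub_ge {N : ℕ} (hN : 0 < N) (x : Set.Icc (0:ℝ) 1) :
    ∃ y : Set.Icc (0:ℝ) 1, |(y : ℝ) - x| ≤ 1 / N ∧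
      1 ≤ |Real.cos (N * Real.pi * y) - Real.cos (N * Real.pi * x)| := by
  have hN' : (0:ℝ) < N := by exact_mod_cast hN
  obtain ⟨k, hkN, hk, hk'⟩ := exists_grid_interval hN x.2
  have hkN' : (k : ℝ) + 1 ≤ N := by exact_mod_cast hkN
  have ha : (k : ℝ) / N ∈ Set.Icc (0:ℝ) 1 :=
    ⟨by positivity, by rw [div_le_one hN']; linarith⟩
  have hb : ((k : ℝ) + 1) / N ∈ Set.Icc (0:ℝ) 1 :=
    ⟨by positivity, by rwa [div_le_one hN']⟩
  have hax : |(k : ℝ) / N - x| ≤ 1 / N := by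
    rw [abs_le]
    constructor <;> rw [← sub_nonneg] <;> field_simp <;> nlinarith
  have hbx : |((k : ℝ) + 1) / N - x| ≤ 1 / N := by
    rw [abs_le]
    constructor <;> rw [← sub_nonneg] <;> field_simp <;> nlinarith
  have ca : Real.cos (N * Real.pi * (k / N)) = (-1) ^ k := by
    rw [← Real.cos_nat_mul_pi]; congr 1; field_simp
  have cb : Real.cos (N * Real.pi * ((k + 1) / N)) = -(-1) ^ k := by
    have := Real.cos_nat_mul_pi (k + 1)
    rw [pow_succ, mul_neg_one] at this
    rw [← this]; congr 1; push_cast; field_simp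
  -- The two endpoint values are `±1` and `∓1`, so one of them is at distance at least `1`.
  by_contra! hcon
  have h1 := hcon ⟨_, ha⟩ hax
  have h2 := hcon ⟨_, hb⟩ hbx
  simp only [ca, cb] at h1 h2
  rw [abs_lt] at h1 h2
  rcases neg_one_pow_eq_or ℝ k with h | h <;> rw [h] at h1 h2 <;> linarith [h1.1, h1.2, h2.1, h2.2]

lemma dense_compl_calm (n : ℕ) : Dense (calm n)ᶜ := by
  rw [Metric.dense_iff]
  intro f ε hε
  obtain ⟨p, hp⟩ := exists_polynomial_near_of_continuousOn 0 1 (Set.IccExtend zero_le_one f)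
    (f.continuous.Icc_extend' (h := zero_le_one)).continuousOn (ε / 4) (by positivity)
  have hpC : ContDiff ℝ 1 fun t : ℝ => p.eval t := by
    simpa using p.contDiff_aeval (𝕜 := ℝ) 1
  obtain ⟨L, hL⟩ := (hpC.locallyLipschitz.locallyLipschitzOn
    (s := Set.Icc (0:ℝ) 1)).exists_lipschitzOnWith_of_compact isCompact_Icc
  set δ := ε / 4 with hδ
  have hδ0 : 0 < δ := by positivity
  obtain ⟨N, hN⟩ := exists_nat_gt ((n + L) / δ)
  have hN' : (0:ℝ) < N := lt_of_le_of_lt (by positivity) hN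
  refine ⟨⟨fun x => p.eval (x : ℝ) + δ * Real.cos (N * Real.pi * x), by fun_prop⟩, ?_, ?_⟩
  · rw [Metric.mem_ball]
    refine ((ContinuousMap.dist_le (C := 2 * δ) (by positivity)).2 fun x => ?_).trans_lt
      (by linarith)
    have h1 := hp x x.2
    rw [Set.IccExtend_val, abs_lt] at h1
    rw [Real.dist_eq, abs_le]
    have h2 := Real.neg_one_le_cos (N * Real.pi * x)
    have h3 := Real.cos_le_one (N * Real.pi * x)
    constructor <;> simp only [ContinuousMap.coe_mk] <;> nlinarith [h1.1, h1.2]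
  · rintro ⟨x, hx⟩
    obtain ⟨y, hyx, hy⟩ := exists_cos_sub_ge (by exact_mod_cast hN') x
    have h1 := hx y
    have h2 := hL.dist_le_mul y y.2 x x.2
    simp only [ContinuousMap.coe_mk, Real.dist_eq] at h1 h2
    have h3 : δ ≤ |δ * (Real.cos (N * Real.pi * y) - Real.cos (N * Real.pi * x))| := by
      rw [abs_mul, abs_of_pos hδ0]; nlinarith
    have h4 : δ * (Real.cos (N * Real.pi * y) - Real.cos (N * Real.pi * x)) =
        (p.eval (y : ℝ) + δ * Real.cos (N * Real.pi * y) -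
          (p.eval (x : ℝ) + δ * Real.cos (N * Real.pi * x))) -
        (p.eval (y : ℝ) - p.eval (x : ℝ)) := by ring
    rw [h4] at h3
    have h5 : δ ≤ (n + L) * |(y : ℝ) - x| := by
      linarith [h3.trans (abs_sub _ _)]
    have h6 : (n + L) * |(y : ℝ) - x| ≤ (n + L) * (1 / N) := by gcongr
    rw [div_lt_iff₀ hδ0] at hN
    have h7 := h5.trans h6
    rw [mul_one_div, le_div_iff₀ hN'] at h7
    linarith

/-- **Banach's theorem**: the set of continuous functions on `[0,1]` that are nowhere
differentiable (within `[0,1]`) is residual in `C([0,1], ℝ)` with the topology of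
uniform convergence. -/
theorem banach_nowhere_differentiable_residual :
    {f : C(Set.Icc (0:ℝ) 1, ℝ) |
        ∀ x : Set.Icc (0:ℝ) 1,
          ¬ DifferentiableWithinAt ℝ (fun t : ℝ => f (Set.projIcc 0 1 zero_le_one t))
              (Set.Icc (0:ℝ) 1) (x : ℝ)} ∈
      residual C(Set.Icc (0:ℝ) 1, ℝ) := by
  have h : ⋂ n, (calm n)ᶜ ∈ residual C(Set.Icc (0:ℝ) 1, ℝ) :=
    countable_iInter_mem.2 fun n =>
      residual_of_dense_open (isClosed_calm n).isOpen_compl (dense_compl_calm n)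
  refine Filter.mem_of_superset h fun f hf x hx => ?_
  obtain ⟨n, hn⟩ := exists_mem_calm_of_differentiable f x hx
  exact Set.mem_iInter.1 hf n hn
end

section
/- Let X be a nonempty perfect Polish space and let R be a meager subset of X × X. Then there exists a nonempty perfect subset P of X that is R-independent: for all x, y in P with x ≠ y, the pair (x, y) is not in R. -/
/-!
The independent perfect set is the image of the Cantor space `ℕ → Bool` under a generic continuous
map. Fix a complete metric on `X`, so that `C(ℕ → Bool, X)` with the uniform metric is complete and
hence a Baire space. For a dense open `G ⊆ X × X` and `k : ℕ`, consider the set of those `f` with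
`(f x, f y) ∈ G` whenever `x k ≠ y k`. It is open, because the pairs `(x, y)` with `x k ≠ y k` form
a compact set (`isOpen_setOf_separated`). It is dense, because a given `f` can be approximated by a
map depending only on the first `m > k` digits, and the finitely many values of such a map can be
moved slightly so that they lie pairwise in `G` (`dense_setOf_separated`, which rests on
`dense_setOf_pairwise_mem`).

Letting `k` and `G` vary over countable families, for every comeager `S ⊆ X × X` a generic `f`
satisfies `(f x, f y) ∈ S` for all `x ≠ y`. As `X` is perfect, the complement of the diagonal is
comeager, so `S` can be taken to be the complement of `R` minus the diagonal. Such an `f` is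
injective, its range is perfect because the Cantor space is compact without isolated points, and
distinct points of the range form pairs outside `R`.
-/

open Set Filter Topology

lemma dense_setOf_pair_mem {ι X : Type*} [TopologicalSpace X] {i j : ι} (hij : i ≠ j)
    {G : Set (X × X)} (hG : Dense G) : Dense {p : ι → X | (p i, p j) ∈ G} := by
  classical
  intro p
  -- Replacing the coordinates `i` and `j` of `p` embeds `X × X` continuously through `p`,
  -- which reduces the claim to the density of `G` at `(p i, p j)`.
  let φ : X × X → ι → X := fun q => Function.update (Function.update p i q.1) j q.2
  have hφ : Continuous φ := by fun_prop
  have h := map_mem_closure (t := {p : ι → X | (p i, p j) ∈ G}) hφ (hG (p i, p j)) (by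
    intro q hq
    simpa [φ, hij] using hq)
  simpa [φ] using h

/-- Any finite family of points can be moved slightly so that all ordered pairs of entries with
distinct indices lie in the dense open set `G`. -/
lemma dense_setOf_pairwise_mem {ι X : Type*} [Finite ι] [TopologicalSpace X] [PolishSpace X]
    {G : Set (X × X)} (ho : IsOpen G) (hG : Dense G) :
    Dense {p : ι → X | ∀ i j, i ≠ j → (p i, p j) ∈ G} := by
  have : ∀ᶠ p in residual (ι → X), ∀ i j, i ≠ j → (p i, p j) ∈ G := by
    simp only [eventually_countable_forall]
    intro i j hij
    exact residual_of_dense_open (ho.preimage (by fun_prop)) (dense_setOf_pair_mem hij hG)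
  exact dense_of_mem_residual this

/-- Uniform continuity on the Cantor space, in terms of initial segments. -/
lemma exists_agree_dist_lt {X : Type*} [MetricSpace X] (f : C(ℕ → Bool, X)) {ε : ℝ} (hε : 0 < ε) :
    ∃ n : ℕ, ∀ x y : ℕ → Bool, (∀ i < n, x i = y i) → dist (f x) (f y) < ε := by
  let : MetricSpace (ℕ → Bool) := PiNat.metricSpaceOfDiscreteUniformity (fun _ => rfl)
  obtain ⟨δ, hδ, h⟩ := Metric.uniformContinuous_iff.1
    (CompactSpace.uniformContinuous_of_continuous f.continuous) ε hε
  obtain ⟨n, hn⟩ := exists_pow_lt_of_lt_one hδ (by norm_num : (1 / 2 : ℝ) < 1)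
  exact ⟨n, fun x y hxy => h ((PiNat.mem_cylinder_iff_dist_le.1 hxy).trans_lt hn)⟩

lemma isOpen_setOf_separated {X : Type*} [TopologicalSpace X] {G : Set (X × X)} (ho : IsOpen G)
    (k : ℕ) : IsOpen {f : C(ℕ → Bool, X) | ∀ x y, x k ≠ y k → (f x, f y) ∈ G} := by
  -- The condition only involves the compact set of pairs differing at the digit `k`.
  have hK : IsCompact {p : (ℕ → Bool) × (ℕ → Bool) | p.1 k ≠ p.2 k} := by
    refine IsClosed.isCompact ?_
    exact (isClosed_discrete {b : Bool × Bool | b.1 ≠ b.2}).preimage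
      (f := fun p : (ℕ → Bool) × (ℕ → Bool) => (p.1 k, p.2 k)) (by fun_prop)
  have hcont : Continuous fun q : C(ℕ → Bool, X) × ((ℕ → Bool) × (ℕ → Bool)) =>
      (q.1 q.2.1, q.1 q.2.2) := by fun_prop
  rw [isOpen_iff_mem_nhds]
  intro f hf
  have := hK.eventually_forall_of_forall_eventually (x₀ := f)
    (P := fun g p => (g p.1, g p.2) ∈ G)
    (fun p hp => (ho.preimage hcont).mem_nhds (x := (f, p)) (hf _ _ hp))
  filter_upwards [this] with g hg x y hxy using hg (x, y) hxy

lemma dense_setOf_separated {X : Type*} [MetricSpace X] [PolishSpace X] {G : Set (X × X)}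
    (ho : IsOpen G) (hG : Dense G) (k : ℕ) :
    Dense {f : C(ℕ → Bool, X) | ∀ x y, x k ≠ y k → (f x, f y) ∈ G} := by
  rw [Metric.dense_iff]
  intro f ε hε
  obtain ⟨n, hn⟩ := exists_agree_dist_lt f (half_pos hε)
  let m := max n (k + 1)
  -- `r` restricts a sequence to its first `m` digits and `e` extends `m` digits by `false`;
  -- the approximation of `f` is `p ∘ r`, where `p` is a small perturbation of `f ∘ e`.
  let r : (ℕ → Bool) → Fin m → Bool := fun x i => x i
  let e : (Fin m → Bool) → ℕ → Bool := fun u i => if h : i < m then u ⟨i, h⟩ else false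
  obtain ⟨p, hp, hd⟩ := (dense_setOf_pairwise_mem (ι := Fin m → Bool) ho hG).exists_dist_lt
    (fun u => f (e u)) (half_pos hε)
  let g : C(ℕ → Bool, X) := ⟨fun x => p (r x), continuous_of_discreteTopology.comp (by fun_prop)⟩
  refine ⟨g, ?_, ?_⟩
  · rw [Metric.mem_ball, ContinuousMap.dist_lt_iff hε]
    intro x
    have h1 : dist (f (e (r x))) (p (r x)) < ε / 2 := (dist_le_pi_dist _ p (r x)).trans_lt hd
    have h2 : dist (f (e (r x))) (f x) < ε / 2 := hn _ _ fun i hi => by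
      have him : i < m := hi.trans_le (le_max_left _ _)
      simp only [e, r, dif_pos him]
    have := dist_triangle_left (p (r x)) (f x) (f (e (r x)))
    change dist (p (r x)) (f x) < ε
    linarith
  · -- Since `k < m`, sequences differing at `k` have different restrictions.
    intro x y hxy
    refine hp _ _ fun h => hxy ?_
    exact congrFun h ⟨k, (Nat.lt_succ_self k).trans_le (le_max_right n (k + 1))⟩

/-- A generic continuous map from the Cantor space sends every pair of distinct points into a given
comeager set. -/
lemma eventually_residual_forall_ne_mem {X : Type*} [MetricSpace X] [PolishSpace X]
    {S : Set (X × X)} (hS : S ∈ residual (X × X)) :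
    ∀ᶠ f in residual C(ℕ → Bool, X), ∀ x y, x ≠ y → (f x, f y) ∈ S := by
  obtain ⟨T, hTo, hTd, hTc, hTS⟩ := mem_residual_iff.1 hS
  have h : ∀ᶠ f in residual C(ℕ → Bool, X),
      ∀ G ∈ T, ∀ k : ℕ, ∀ x y, x k ≠ y k → (f x, f y) ∈ G := by
    rw [eventually_countable_ball hTc]
    intro G hG
    rw [eventually_countable_forall]
    intro k
    exact residual_of_dense_open (isOpen_setOf_separated (hTo G hG) k)
      (dense_setOf_separated (hTo G hG) (hTd G hG) k)
  filter_upwards [h] with f hf x y hxy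
  obtain ⟨k, hk⟩ := Function.ne_iff.1 hxy
  exact hTS fun G hG => hf G hG k x y hk

lemma compl_diagonal_mem_residual {X : Type*} [TopologicalSpace X] [T2Space X] [PerfectSpace X] :
    (diagonal X)ᶜ ∈ residual (X × X) := by
  refine residual_of_dense_open isClosed_diagonal.isOpen_compl ?_
  rintro ⟨a, b⟩
  have : NeBot (𝓝[≠] b) := perfectSpace_iff_forall_not_isolated.1 ‹_› b
  exact map_mem_closure (f := fun c : X => (a, c)) (by fun_prop) (dense_compl_singleton a b)
    fun c hc => fun h => hc (Eq.symm h)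

lemma perfect_range_of_injective {X : Type*} [TopologicalSpace X] [T2Space X]
    (f : C(ℕ → Bool, X)) (hf : Function.Injective f) : Perfect (range f) := by
  refine ⟨(isCompact_range f.continuous).isClosed, preperfect_iff_nhds.2 ?_⟩
  rintro _ ⟨x, rfl⟩ U hU
  -- Flipping the `n`-th digit of `x` gives points other than `x` that converge to `x`.
  have ht : Tendsto (fun n : ℕ => Function.update x n (!x n)) atTop (𝓝 x) := by
    rw [tendsto_pi_nhds]
    intro i
    refine tendsto_const_nhds.congr' ?_
    filter_upwards [eventually_gt_atTop i] with n hn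
    simp [hn.ne]
  obtain ⟨n, hn⟩ := ((f.continuous.tendsto x).comp ht |>.eventually hU).exists
  refine ⟨_, ⟨hn, mem_range_self _⟩, fun h => ?_⟩
  have := congrFun (hf h) n
  simp at this

/-- **Mycielski's theorem**: if `X` is a nonempty perfect Polish space and `R ⊆ X × X` is
meager, then there is a nonempty perfect `R`-independent subset of `X`. -/
theorem mycielski_independent_perfect {X : Type*} [TopologicalSpace X] [PolishSpace X]
    [Nonempty X] [PerfectSpace X] (R : Set (X × X)) (hR : IsMeagre R) :
    ∃ P : Set X, P.Nonempty ∧ Perfect P ∧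
      ∀ x ∈ P, ∀ y ∈ P, x ≠ y → (x, y) ∉ R := by
  let := TopologicalSpace.upgradeIsCompletelyMetrizable X
  have : Nonempty C(ℕ → Bool, X) := ⟨ContinuousMap.const _ (Classical.arbitrary X)⟩
  have hgen := eventually_residual_forall_ne_mem (inter_mem hR compl_diagonal_mem_residual)
  obtain ⟨f, hf⟩ := (dense_of_mem_residual hgen).nonempty
  refine ⟨range f, range_nonempty f, perfect_range_of_injective f ?_, ?_⟩
  · intro x y h
    by_contra hne
    exact (hf x y hne).2 h
  · rintro _ ⟨x, rfl⟩ _ ⟨y, rfl⟩ hxy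
    exact (hf x y fun h => hxy (congrArg f h)).1
end

section
/- Let X be a topological space and let (A_s), indexed by finite sequences s of natural numbers, be a family of subsets of X each of which has the Baire property. Then the result of the Suslin operation 𝒜 applied to this family, namely the set ⋃_{x ∈ ℕ^ℕ} ⋂_{n ∈ ℕ} A_{x↾n} (where x↾n is the initial segment of x of length n), also has the Baire property in X. -/
/-!
The proof is a regularity argument in the style of Szpilrajn-Marczewski. By the Banach category
theorem (`isMeagre_inter_sUnion`), every set `S` meets the union `W` of all open sets in which it is
meagre in a meagre set. Hence `Wᶜ ∪ (S ∩ W)` is a Baire measurable hull of `S`: a Baire measurable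
superset such that every Baire measurable subset of the difference is meagre
(`exists_baireMeasurable_hull`).

For a finite sequence `s`, let `S_s` be the result of the operation restricted to branches through
`s`, and let `B_s` be a Baire measurable hull of `S_s` contained in `A_s`. Since `S_s = ⋃_k S_{s⌢k}`,
the set `B_s \ ⋃_k B_{s⌢k}` is Baire measurable and contained in `B_s \ S_s`, so it is meagre. Let `M`
be the countable union of these sets. A point of `B_∅` outside `M` admits a branch along which it lies
in every `B_s ⊆ A_s`, so it belongs to `S_∅`. Thus `B_∅ \ S_∅ ⊆ M`, and `S_∅` differs from `B_∅` by a
meagre set.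
-/

/-- A set has the Baire property if it differs from an open set by a meager set. -/
def HasBaireProperty {X : Type*} [TopologicalSpace X] (S : Set X) : Prop :=
  ∃ U : Set X, IsOpen U ∧ IsMeagre (symmDiff S U)

open Set Filter Topology

theorem hasBaireProperty_iff_baireMeasurableSet {X : Type*} [TopologicalSpace X] {S : Set X} :
    HasBaireProperty S ↔ BaireMeasurableSet S := by
  rw [BaireMeasurableSet.iff_residualEq_isOpen, HasBaireProperty]
  refine exists_congr fun U => and_congr_right fun _ => ?_
  rw [IsMeagre, eventuallyEq_set, Filter.Eventually]
  refine iff_of_eq (congrArg (· ∈ residual X) ?_)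
  ext x
  simp only [mem_compl_iff, mem_symmDiff, mem_ofPred_eq]
  tauto

theorem IsMeagre.exists_seq_isNowhereDense {X : Type*} [TopologicalSpace X] {S : Set X}
    (hS : IsMeagre S) : ∃ f : ℕ → Set X, (∀ n, IsNowhereDense (f n)) ∧ S ⊆ ⋃ n, f n := by
  obtain ⟨T, hT, hc, hsub⟩ := isMeagre_iff_countable_union_isNowhereDense.1 hS
  obtain ⟨f, hf⟩ := (hc.insert ∅).exists_eq_range (insert_nonempty _ _)
  refine ⟨f, fun n => ?_, ?_⟩
  · have hn : f n ∈ insert ∅ T := hf ▸ mem_range_self n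
    rcases hn with h | h
    · rw [h]; simp [IsNowhereDense]
    · exact hT _ h
  · rw [← sUnion_range, ← hf]
    exact hsub.trans (sUnion_subset_sUnion (subset_insert _ _))

/-- The members of a disjoint open family are clopen in its union, so nowhere dense sets taken one
from each member have a nowhere dense union; this makes an arbitrarily large family harmless. -/
theorem isMeagre_inter_sUnion_of_pairwiseDisjoint {X : Type*} [TopologicalSpace X] {S : Set X}
    {F : Set (Set X)} (hd : F.PairwiseDisjoint id) (ho : ∀ O ∈ F, IsOpen O)
    (hm : ∀ O ∈ F, IsMeagre (S ∩ O)) : IsMeagre (S ∩ ⋃₀ F) := by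
  choose! f hf hsub using fun O hO => (hm O hO).exists_seq_isNowhereDense
  have key : ∀ n, IsNowhereDense (⋃ O ∈ F, f O n ∩ O) := by
    intro n
    rw [isNowhereDense_iff_forall_notMem_nhds]
    intro x hx hcl
    obtain ⟨O, hO, hxf, hxO⟩ : ∃ O ∈ F, x ∈ f O n ∧ x ∈ O := by
      simpa [and_left_comm] using hx
    refine isNowhereDense_iff_forall_notMem_nhds.1 (hf O hO n) x hxf ?_
    refine mem_of_superset (inter_mem hcl ((ho O hO).mem_nhds hxO)) ?_
    refine (ho O hO).closure_inter.trans (closure_mono ?_)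
    rintro y ⟨hy, hyO⟩
    obtain ⟨O', hO', hyf, hyO'⟩ : ∃ O ∈ F, y ∈ f O n ∧ y ∈ O := by
      simpa [and_left_comm] using hy
    have : O' = O := hd.elim_set hO' hO y hyO' hyO
    exact this ▸ hyf
  refine (isMeagre_iUnion fun n => (key n).isMeagre).mono ?_
  rintro x ⟨hxS, O, hO, hxO⟩
  obtain ⟨n, hn⟩ := mem_iUnion.1 (hsub O hO ⟨hxS, hxO⟩)
  exact mem_iUnion.2 ⟨n, mem_biUnion hO ⟨hn, hxO⟩⟩

/-- **Banach category theorem**: a set is meagre in the union of all the open sets in which it is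
meagre. -/
theorem isMeagre_inter_sUnion {X : Type*} [TopologicalSpace X] (S : Set X) :
    IsMeagre (S ∩ ⋃₀ {O | IsOpen O ∧ IsMeagre (S ∩ O)}) := by
  obtain ⟨F, hF⟩ := zorn_subset
    {F : Set (Set X) | F ⊆ {O | IsOpen O ∧ IsMeagre (S ∩ O)} ∧ F.PairwiseDisjoint id} (by
      intro c hc hchain
      exact ⟨⋃₀ c, ⟨sUnion_subset fun F hF => (hc hF).1,
        (pairwiseDisjoint_sUnion hchain.directedOn).2 fun F hF => (hc hF).2⟩,
        fun F hF => subset_sUnion_of_mem hF⟩)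
  obtain ⟨hFsub, hFd⟩ := hF.prop
  have hopen : IsOpen (⋃₀ F) := isOpen_sUnion fun O hO => (hFsub hO).1
  -- By maximality, no open set in which `S` is meagre has a point outside the closure.
  have hdense : ⋃₀ {O | IsOpen O ∧ IsMeagre (S ∩ O)} ⊆ closure (⋃₀ F) := by
    rintro x ⟨O, ⟨hO, hOm⟩, hxO⟩
    by_contra hx
    set V := O \ closure (⋃₀ F) with hV
    have hVF : ∀ O' ∈ F, Disjoint V O' := fun O' hO' =>
      disjoint_left.2 fun y hy hy' => hy.2 (subset_closure ⟨O', hO', hy'⟩)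
    have hins : insert V F ⊆ F := hF.le_of_ge
      (y := insert V F)
      ⟨insert_subset ⟨hO.sdiff isClosed_closure, hOm.mono (by gcongr; exact sdiff_subset)⟩ hFsub,
        hFd.insert fun O' hO' _ => hVF O' hO'⟩ (subset_insert _ _)
    exact hx (subset_closure ⟨V, hins (mem_insert _ _), hxO, hx⟩)
  have hfr : IsMeagre (closure (⋃₀ F) \ ⋃₀ F) := by
    rw [← hopen.frontier_eq]
    refine IsNowhereDense.isMeagre ?_
    rw [IsNowhereDense, isClosed_frontier.closure_eq, ← frontier_compl]
    exact interior_frontier hopen.isClosed_compl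
  refine ((isMeagre_inter_sUnion_of_pairwiseDisjoint hFd (fun O hO => (hFsub hO).1)
    fun O hO => (hFsub hO).2).union hfr).mono ?_
  rintro x ⟨hxS, hxW⟩
  by_cases hx : x ∈ ⋃₀ F
  · exact Or.inl ⟨hxS, hx⟩
  · exact Or.inr ⟨hdense hxW, hx⟩

/-- Every set has a Baire measurable hull, which can be taken inside a given Baire measurable
superset. -/
theorem exists_baireMeasurable_hull {X : Type*} [TopologicalSpace X] {S A : Set X}
    (hA : BaireMeasurableSet A) (hSA : S ⊆ A) :
    ∃ B, BaireMeasurableSet B ∧ S ⊆ B ∧ B ⊆ A ∧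
      ∀ Z, BaireMeasurableSet Z → Z ⊆ B \ S → IsMeagre Z := by
  set W := ⋃₀ {O | IsOpen O ∧ IsMeagre (S ∩ O)} with hW
  have hWo : IsOpen W := isOpen_sUnion fun O hO => hO.1
  refine ⟨(Wᶜ ∪ S ∩ W) ∩ A, (hWo.baireMeasurableSet.compl.union
    (isMeagre_inter_sUnion S).baireMeasurableSet).inter hA, ?_, inter_subset_right, ?_⟩
  · intro x hx
    refine ⟨?_, hSA hx⟩
    by_cases h : x ∈ W
    · exact Or.inr ⟨hx, h⟩
    · exact Or.inl h
  · intro Z hZ hZB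
    obtain ⟨U, hU, hZU⟩ := hZ.residualEq_isOpen
    rw [eventuallyEq_set] at hZU
    -- `Z` is comeagre in `U` and misses `S`, so `U ⊆ W`; but `Z` misses `W`.
    have hUW : U ⊆ W := by
      refine subset_sUnion_of_mem ⟨hU, ?_⟩
      rw [IsMeagre]
      filter_upwards [hZU] with x hx hxSU
      exact (hZB (hx.2 hxSU.2)).2 hxSU.1
    rw [IsMeagre]
    filter_upwards [hZU] with x hx hxZ
    have hxB := hZB hxZ
    rcases hxB.1.1 with h | h
    · exact h (hUW (hx.1 hxZ))
    · exact hxB.2 h.1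

/-- If every node `s` with `y ∈ B s` has a child with the same property, then a branch through
such nodes exists. -/
theorem exists_branch {B : ∀ n : ℕ, (Fin n → ℕ) → Prop} (h0 : B 0 Fin.elim0)
    (hstep : ∀ n s, B n s → ∃ k, B (n + 1) (Fin.snoc s k)) :
    ∃ x : ℕ → ℕ, ∀ n, B n (fun i : Fin n => x i) := by
  choose! k hk using hstep
  let g : ∀ n, {s : Fin n → ℕ // B n s} := fun n =>
    Nat.rec ⟨Fin.elim0, h0⟩ (fun n s => ⟨Fin.snoc s.1 (k n s.1), hk n s.1 s.2⟩) n
  have hg : ∀ n, (g (n + 1)).1 = Fin.snoc (g n).1 (k n (g n).1) := fun n => rfl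
  refine ⟨fun n => k n (g n).1, fun n => ?_⟩
  have : (g n).1 = fun i : Fin n => k i (g i).1 := by
    induction n with
    | zero => exact Subsingleton.elim _ _
    | succ n ih =>
      rw [hg]
      funext i
      refine Fin.lastCases ?_ (fun j => ?_) i
      · simp
      · rw [Fin.snoc_castSucc, ih]
        simp
  exact this ▸ (g n).2

/-- **Nikodym's theorem**: the Suslin operation `𝒜` preserves the Baire property. -/
theorem nikodym_suslin_baire {X : Type*} [TopologicalSpace X]
    (A : ∀ n : ℕ, (Fin n → ℕ) → Set X)
    (hA : ∀ (n : ℕ) (s : Fin n → ℕ), HasBaireProperty (A n s)) :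
    HasBaireProperty (⋃ x : ℕ → ℕ, ⋂ n : ℕ, A n (fun i : Fin n => x i)) := by
  simp only [hasBaireProperty_iff_baireMeasurableSet] at hA ⊢
  let S : ∀ n : ℕ, (Fin n → ℕ) → Set X := fun n s =>
    {y | ∃ x : ℕ → ℕ, (fun i : Fin n => x i) = s ∧ ∀ m, y ∈ A m (fun i : Fin m => x i)}
  have hSA : ∀ n s, S n s ⊆ A n s := by
    rintro n s y ⟨x, rfl, hx⟩
    exact hx n
  choose B hBm hSB hBA hB using fun n s => exists_baireMeasurable_hull (hA n s) (hSA n s)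
  let C : ∀ n : ℕ, (Fin n → ℕ) → Set X := fun n s => B n s \ ⋃ k, B (n + 1) (Fin.snoc s k)
  have hC : ∀ n s, IsMeagre (C n s) := by
    intro n s
    refine hB n s _ ((hBm n s).diff (.iUnion fun k => hBm _ _)) ?_
    rintro y ⟨hyB, hy⟩
    refine ⟨hyB, ?_⟩
    rintro ⟨x, rfl, hx⟩
    refine hy (mem_iUnion.2 ⟨x n, hSB _ _ ⟨x, ?_, hx⟩⟩)
    funext i
    refine Fin.lastCases ?_ (fun j => ?_) i <;> simp
  have hM : IsMeagre (⋃ n, ⋃ s, C n s) := isMeagre_iUnion fun n => isMeagre_iUnion (hC n)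
  refine (hBm 0 Fin.elim0).congr (eventuallyEq_set.2 ?_)
  rw [IsMeagre] at hM
  filter_upwards [hM] with y hy
  constructor
  · intro hyB
    obtain ⟨x, hx⟩ := exists_branch (B := fun n s => y ∈ B n s) hyB (by
      intro n s hys
      by_contra hcon
      refine hy (mem_iUnion₂.2 ⟨n, s, hys, fun h => hcon (mem_iUnion.1 h)⟩))
    exact mem_iUnion.2 ⟨x, mem_iInter.2 fun n => hBA _ _ (hx n)⟩
  · intro hyS
    obtain ⟨x, hx⟩ := mem_iUnion.1 hyS
    exact hSB _ _ ⟨x, Subsingleton.elim _ _, mem_iInter.1 hx⟩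
end

section
/- There exists a residual set G in C([0,1], ℝ) (with the supremum metric) such that for every f in G, writing m = min f and M = max f, the following hold: the level sets f⁻¹({m}) and f⁻¹({M}) are singletons; for all but countably many y in the open interval (m, M), the level set f⁻¹({y}) is a nonempty perfect nowhere dense subset of [0,1]; and for each of the remaining (countably many) y in (m, M), the level set f⁻¹({y}) is the union of a nonempty perfect nowhere dense set and a single point not belonging to that perfect set. -/
/-!
A typical `f` satisfies two conditions, packaged as `Typical`.

* Neither `f` nor `-f` has a weak point of increase, even a one-sided one at `0` or `1`. At a fixed
  scale `δ`, the functions with such a point form a closed set (`[0,1]` is compact), and adding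
  `ε sin (2πkx)` with `k` large leaves that set: within a period, a point of the first half has the
  bottom of the wave to its right and a point of the second half has the top to its left, while `f`
  itself varies by less than `ε` over a period (`compl_increaseSet_mem_residual`).
* For disjoint intervals `K`, `L` with rational endpoints, the extrema of `f` over `K` differ from
  those over `L`. Coincidence is a closed condition, destroyed by adding a small multiple of a
  Urysohn function equal to `1` on `K` and `0` on `L` (`compl_coincidenceSet_mem_residual`).

The first condition makes every level set nowhere dense, and, through the intermediate value
theorem, makes every isolated point of a level set a local extremum
(`Typical.extr_of_isolated`). The second says that distinct local extrema have distinct values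
(`Typical.extr_unique`). Hence the minimum and the maximum are attained once, a level set has at
most one isolated point, and only countably many levels have one, since the value of a local
extremum is the extremum over an interval with rational endpoints. Removing the isolated point
leaves a perfect set; it is nonempty at an intermediate level because a level set consisting of one
point would make that point a global extremum (`Typical.extr_of_level_singleton`).
-/

/-! ### The exceptional sets -/

/-- The unit interval, as the type on which the functions live. -/
abbrev UI : Type := Set.Icc (0:ℝ) 1

/-- The functions `f` such that `σ * f` has a (weak) point of increase at scale `δ`: a point `x`
with `σ * f ≤ σ * f x` on `[x - δ, x]` and `σ * f ≥ σ * f x` on `[x, x + δ]`. Both intervals are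
truncated to `[0,1]`, so that `x = 0` and `x = 1` are allowed. -/
def increaseSet (σ δ : ℝ) : Set C(UI, ℝ) :=
  {f | ∃ x : UI, (∀ z : UI, (x:ℝ) - δ ≤ z → z ≤ x → σ * f z ≤ σ * f x) ∧
    (∀ z : UI, x ≤ z → (z:ℝ) ≤ x + δ → σ * f x ≤ σ * f z)}

/-- `f` attains at `p ∈ K` its maximum (for `σ = 1`) or minimum (for `σ = -1`)
over `K`. -/
def ExtrAt (σ : ℝ) (K : Set UI) (f : C(UI, ℝ)) (p : UI) : Prop :=
  p ∈ K ∧ ∀ z ∈ K, σ * f z ≤ σ * f p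

/-- The functions whose `σ`-extremum over `K` and `τ`-extremum over `L` coincide. -/
def coincidenceSet (σ τ : ℝ) (K L : Set UI) : Set C(UI, ℝ) :=
  {f | ∃ p q : UI, ExtrAt σ K f p ∧ ExtrAt τ L f q ∧ f p = f q}

/-- The trace on `[0,1]` of a closed interval with rational endpoints. -/
def ratIcc (a b : ℚ) : Set UI := {z | (a:ℝ) ≤ z ∧ (z:ℝ) ≤ b}

lemma isClosed_ratIcc (a b : ℚ) : IsClosed (ratIcc a b) :=
  (isClosed_le continuous_const continuous_subtype_val).inter
    (isClosed_le continuous_subtype_val continuous_const)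

/-! ### The exceptional sets are closed -/

/-- The witness `x` cannot escape, because it ranges over a compact space. The order
constraints on `z` are removed by replacing `z` with its projection to the moving interval. -/
lemma isClosed_increaseSet (σ : ℝ) {δ : ℝ} (hδ : 0 ≤ δ) : IsClosed (increaseSet σ δ) := by
  let L : UI → UI → UI := fun x z =>
    Set.projIcc 0 1 zero_le_one (min (x:ℝ) (max z (x - δ)))
  let R : UI → UI → UI := fun x z =>
    Set.projIcc 0 1 zero_le_one (max (x:ℝ) (min z (x + δ)))
  have hL : ∀ z, Continuous fun x => L x z := fun z => by
    simp only [L]; exact continuous_projIcc.comp (by fun_prop)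
  have hR : ∀ z, Continuous fun x => R x z := fun z => by
    simp only [R]; exact continuous_projIcc.comp (by fun_prop)
  have key : increaseSet σ δ = Prod.snd '' {w : UI × C(UI, ℝ) |
      (∀ z, σ * w.2 (L w.1 z) ≤ σ * w.2 w.1) ∧ (∀ z, σ * w.2 w.1 ≤ σ * w.2 (R w.1 z))} := by
    ext f
    simp only [increaseSet, Set.mem_ofPred_eq, Set.mem_image, Prod.exists, exists_eq_right]
    refine exists_congr fun x => and_congr ⟨fun h z => ?_, fun h z h1 h2 => ?_⟩
      ⟨fun h z => ?_, fun h z h1 h2 => ?_⟩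
    · have hx := x.2; have hz := z.2
      have e : ((L x z : UI) : ℝ) = min (x:ℝ) (max z (x - δ)) := by
        simp only [L]
        rw [Set.projIcc_of_mem]
        refine ⟨le_min hx.1 (le_max_of_le_left hz.1), min_le_of_left_le hx.2⟩
      refine h _ ?_ ?_
      · rw [e]; exact le_min (by linarith) (le_max_right _ _)
      · rw [← Subtype.coe_le_coe, e]; exact min_le_left _ _
    · have e : L x z = z := by
        simp only [L]
        rw [max_eq_left h1, min_eq_right (by exact_mod_cast h2)]
        exact Set.projIcc_val _ z
      simpa [e] using h z
    · have hx := x.2; have hz := z.2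
      have e : ((R x z : UI) : ℝ) = max (x:ℝ) (min z (x + δ)) := by
        simp only [R]
        rw [Set.projIcc_of_mem]
        refine ⟨le_max_of_le_left hx.1, max_le hx.2 (min_le_of_left_le hz.2)⟩
      refine h _ ?_ ?_
      · rw [← Subtype.coe_le_coe, e]; exact le_max_left _ _
      · rw [e]; exact max_le (by linarith) (min_le_right _ _)
    · have e : R x z = z := by
        simp only [R]
        rw [min_eq_left h2, max_eq_right (by exact_mod_cast h1)]
        exact Set.projIcc_val _ z
      simpa [e] using h z
  rw [key]
  refine isClosedMap_snd_of_compactSpace _ (IsClosed.and ?_ ?_)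
  all_goals
    simp only [Set.ofPred_forall]
    refine isClosed_iInter fun z => isClosed_le ?_ ?_
  · exact continuous_const.mul (continuous_snd.eval ((hL z).comp continuous_fst))
  · exact continuous_const.mul (continuous_snd.eval continuous_fst)
  · exact continuous_const.mul (continuous_snd.eval continuous_fst)
  · exact continuous_const.mul (continuous_snd.eval ((hR z).comp continuous_fst))

lemma isClosed_coincidenceSet (σ τ : ℝ) {K L : Set UI} (hK : IsClosed K) (hL : IsClosed L) :
    IsClosed (coincidenceSet σ τ K L) := by
  have key : coincidenceSet σ τ K L = Prod.snd '' {w : (UI × UI) × C(UI, ℝ) |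
      ((w.1.1 ∈ K ∧ ∀ z, z ∈ K → σ * w.2 z ≤ σ * w.2 w.1.1) ∧
        (w.1.2 ∈ L ∧ ∀ z, z ∈ L → τ * w.2 z ≤ τ * w.2 w.1.2)) ∧ w.2 w.1.1 = w.2 w.1.2} := by
    ext f
    simp [coincidenceSet, ExtrAt, and_assoc]
  have c1 : Continuous fun w : (UI × UI) × C(UI, ℝ) => w.2 w.1.1 :=
    continuous_snd.eval (continuous_fst.comp continuous_fst)
  have c2 : Continuous fun w : (UI × UI) × C(UI, ℝ) => w.2 w.1.2 :=
    continuous_snd.eval (continuous_snd.comp continuous_fst)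
  have c3 : ∀ z, Continuous fun w : (UI × UI) × C(UI, ℝ) => w.2 z := fun z =>
    continuous_snd.eval continuous_const
  rw [key]
  refine isClosedMap_snd_of_compactSpace _ (((IsClosed.and ?_ ?_).and (IsClosed.and ?_ ?_)).and
    (isClosed_eq c1 c2))
  · exact hK.preimage (continuous_fst.comp continuous_fst)
  · simp only [Set.ofPred_forall]
    exact isClosed_iInter fun z => isClosed_iInter fun _ =>
      isClosed_le (continuous_const.mul (c3 z)) (continuous_const.mul c1)
  · exact hL.preimage (continuous_snd.comp continuous_fst)
  · simp only [Set.ofPred_forall]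
    exact isClosed_iInter fun z => isClosed_iInter fun _ =>
      isClosed_le (continuous_const.mul (c3 z)) (continuous_const.mul c2)

/-! ### Density of the complements -/

/-- A closed set has residual complement if each of its members `f` leaves it after adding an
arbitrarily small multiple of some function of norm at most one. -/
lemma compl_mem_residual {A : Set C(UI, ℝ)} (hA : IsClosed A)
    (h : ∀ f ∈ A, ∀ ε : ℝ, 0 < ε → ∃ s : C(UI, ℝ), (∀ x, |s x| ≤ 1) ∧ f + ε • s ∉ A) :
    Aᶜ ∈ residual C(UI, ℝ) := by
  refine residual_of_dense_open hA.isOpen_compl ?_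
  rw [Metric.dense_iff]
  intro f r hr
  by_cases hf : f ∈ A
  · obtain ⟨s, hs, hs'⟩ := h f hf (r / 2) (by positivity)
    refine ⟨f + (r / 2) • s, ?_, hs'⟩
    rw [Metric.mem_ball, dist_eq_norm, add_sub_cancel_left]
    have : ‖(r / 2) • s‖ ≤ r / 2 := by
      rw [ContinuousMap.norm_le _ (by positivity)]
      intro x
      simp only [ContinuousMap.smul_apply, smul_eq_mul, Real.norm_eq_abs, abs_mul,
        abs_of_pos (half_pos hr)]
      nlinarith [hs x]
    linarith
  · exact ⟨f, Metric.mem_ball_self hr, hf⟩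

/-- Within each period of `sin (2πk·)` inside `[0,1]`, a point of the first half has the bottom of
the wave to its right and a point of the second half has the top of the wave to its left. -/
lemma exists_wave {k : ℕ} (hk : 0 < k) (x : UI) :
    ∃ z : UI, |(z:ℝ) - x| ≤ 1 / k ∧
      ((x ≤ z ∧ Real.sin (2 * Real.pi * k * z) = -1 ∧ 0 ≤ Real.sin (2 * Real.pi * k * x)) ∨
       (z ≤ x ∧ Real.sin (2 * Real.pi * k * z) = 1 ∧ Real.sin (2 * Real.pi * k * x) ≤ 0)) := by
  have hk' : (0:ℝ) < k := by exact_mod_cast hk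
  -- the period containing `x`; the point `x = 1` is assigned to the last one
  obtain ⟨i, hik, hi1, hi2⟩ : ∃ i : ℕ, i + 1 ≤ k ∧ (i:ℝ) ≤ (k:ℝ) * x ∧ (k:ℝ) * x ≤ (i:ℝ) + 1 := by
    have hkx : 0 ≤ (k:ℝ) * x := mul_nonneg hk'.le x.2.1
    rcases lt_or_eq_of_le x.2.2 with h | h
    · refine ⟨⌊(k:ℝ) * x⌋₊, ?_, Nat.floor_le hkx, (Nat.lt_floor_add_one _).le⟩
      rw [Nat.succ_le_iff, Nat.floor_lt hkx]
      nlinarith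
    · refine ⟨k - 1, by omega, ?_, ?_⟩ <;> rw [Nat.cast_sub hk, h] <;> simp
  have hik' : (i:ℝ) + 1 ≤ k := by exact_mod_cast hik
  have hi0 : (0:ℝ) ≤ i := i.cast_nonneg
  have hsin : ∀ t : ℝ, Real.sin (2 * Real.pi * k * ((i + t) / k)) = Real.sin (2 * Real.pi * t) := by
    intro t
    rw [← Real.sin_add_nat_mul_two_pi (2 * Real.pi * t) i]
    congr 1
    field_simp
    ring
  have hpt : ∀ t : ℝ, 0 ≤ t → t ≤ 1 → (i + t) / k ∈ Set.Icc (0:ℝ) 1 := fun t h0 h1 =>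
    ⟨by positivity, by rw [div_le_one hk']; linarith⟩
  obtain ⟨t, ht⟩ : ∃ t : ℝ, t = k * x - i := ⟨_, rfl⟩
  have hx : (x:ℝ) = (i + t) / k := by rw [ht]; field_simp; ring
  have hπ := Real.pi_pos
  rcases le_total t (1 / 2) with h | h
  · refine ⟨⟨(i + 3 / 4) / k, hpt _ (by norm_num) (by norm_num)⟩, ?_, Or.inl ⟨?_, ?_, ?_⟩⟩
    · simp only [hx]
      rw [← sub_div, abs_div, abs_of_pos hk']
      gcongr
      rw [abs_le]; constructor <;> linarith
    · rw [← Subtype.coe_le_coe, hx]; simp only; gcongr; linarith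
    · rw [hsin, show 2 * Real.pi * (3 / 4) = Real.pi / 2 + Real.pi by ring, Real.sin_add_pi,
        Real.sin_pi_div_two]
    · rw [hx, hsin]
      apply Real.sin_nonneg_of_nonneg_of_le_pi
      · have : 0 ≤ t := by linarith
        positivity
      · nlinarith
  · refine ⟨⟨(i + 1 / 4) / k, hpt _ (by norm_num) (by norm_num)⟩, ?_, Or.inr ⟨?_, ?_, ?_⟩⟩
    · simp only [hx]
      rw [← sub_div, abs_div, abs_of_pos hk']
      gcongr
      rw [abs_le]; constructor <;> linarith
    · rw [← Subtype.coe_le_coe, hx]; simp only; gcongr; linarith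
    · rw [hsin, show 2 * Real.pi * (1 / 4) = Real.pi / 2 by ring, Real.sin_pi_div_two]
    · rw [hx, hsin, ← Real.sin_sub_two_pi]
      apply Real.sin_nonpos_of_nonpos_of_neg_pi_le <;> nlinarith

/-- Adding a small wave of high frequency destroys all points of increase at scale `δ`. -/
lemma compl_increaseSet_mem_residual {σ δ : ℝ} (hσ : σ = 1 ∨ σ = -1) (hδ : 0 < δ) :
    (increaseSet σ δ)ᶜ ∈ residual C(UI, ℝ) := by
  refine compl_mem_residual (isClosed_increaseSet σ hδ.le) fun f _ ε hε => ?_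
  have hσσ : σ * σ = 1 := by rcases hσ with rfl | rfl <;> norm_num
  have habs : |σ| = 1 := by rcases hσ with rfl | rfl <;> norm_num
  obtain ⟨η, hη, hf⟩ := Metric.uniformContinuous_iff.1
    (CompactSpace.uniformContinuous_of_continuous f.continuous) ε hε
  obtain ⟨n, hn⟩ := exists_nat_one_div_lt (lt_min hη hδ)
  obtain ⟨k, hk, hkη, hkδ⟩ : ∃ k : ℕ, 0 < k ∧ 1 / (k:ℝ) < η ∧ 1 / (k:ℝ) < δ :=
    ⟨n + 1, n.succ_pos, by push_cast; exact hn.trans_le (min_le_left _ _),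
      by push_cast; exact hn.trans_le (min_le_right _ _)⟩
  refine ⟨⟨fun x => σ * Real.sin (2 * Real.pi * k * x), by fun_prop⟩, fun x => ?_, ?_⟩
  · simpa [abs_mul, habs] using Real.abs_sin_le_one _
  · rintro ⟨x, hl, hr⟩
    obtain ⟨z, hzx, h⟩ := exists_wave hk x
    have hd : |f z - f x| < ε := hf (lt_of_le_of_lt hzx hkη)
    have hd' : |σ * f z - σ * f x| < ε := by rwa [← mul_sub, abs_mul, habs, one_mul]
    rw [abs_lt] at hd'
    rw [abs_le] at hzx
    have e : ∀ w : ℝ, σ * (ε * (σ * w)) = ε * w := fun w => by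
      linear_combination ε * w * hσσ
    rcases h with ⟨h1, h2, h3⟩ | ⟨h1, h2, h3⟩
    · have := hr z h1 (by linarith)
      simp only [ContinuousMap.add_apply, ContinuousMap.smul_apply, ContinuousMap.coe_mk,
        smul_eq_mul, mul_add, e, h2] at this
      nlinarith
    · have := hl z (by linarith) h1
      simp only [ContinuousMap.add_apply, ContinuousMap.smul_apply, ContinuousMap.coe_mk,
        smul_eq_mul, mul_add, e, h2] at this
      nlinarith

lemma ExtrAt.eq {σ : ℝ} (hσ : σ = 1 ∨ σ = -1) {K : Set UI} {f : C(UI, ℝ)} {p q : UI}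
    (hp : ExtrAt σ K f p) (hq : ExtrAt σ K f q) : f p = f q := by
  have h1 := hp.2 q hq.1
  have h2 := hq.2 p hp.1
  rcases hσ with rfl | rfl <;> linarith

/-- Adding a constant on `K` does not move the points where the extremum over `K` is attained. -/
lemma ExtrAt.of_add {σ c : ℝ} {K : Set UI} {f g : C(UI, ℝ)} {p : UI}
    (h : ExtrAt σ K g p) (hg : ∀ z ∈ K, g z = f z + c) : ExtrAt σ K f p := by
  refine ⟨h.1, fun z hz => ?_⟩
  have := h.2 z hz
  rw [hg z hz, hg p h.1] at this
  linarith

/-- A Urysohn function equal to `1` on `K` and `0` on `L` separates coinciding extrema. -/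
lemma compl_coincidenceSet_mem_residual {σ τ : ℝ} (hσ : σ = 1 ∨ σ = -1) (hτ : τ = 1 ∨ τ = -1)
    {K L : Set UI} (hK : IsClosed K) (hL : IsClosed L) (hKL : Disjoint K L) :
    (coincidenceSet σ τ K L)ᶜ ∈ residual C(UI, ℝ) := by
  refine compl_mem_residual (isClosed_coincidenceSet σ τ hK hL) fun f hf ε hε => ?_
  obtain ⟨s, hs0, hs1, hs⟩ := exists_continuous_zero_one_of_isClosed hL hK hKL.symm
  refine ⟨s, fun x => by rw [abs_of_nonneg (hs x).1]; exact (hs x).2, ?_⟩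
  obtain ⟨p, q, hp, hq, hpq⟩ := hf
  rintro ⟨p', q', hp', hq', hpq'⟩
  have gK : ∀ z ∈ K, (f + ε • s) z = f z + ε := fun z hz => by simp [hs1 hz]
  have gL : ∀ z ∈ L, (f + ε • s) z = f z + 0 := fun z hz => by simp [hs0 hz]
  have e1 := (hp'.of_add gK).eq hσ hp
  have e2 := (hq'.of_add gL).eq hτ hq
  rw [gK p' hp'.1, gL q' hq'.1] at hpq'
  linarith

/-! ### Typical functions -/

/-- The two properties of a function from which the description of level sets follows. -/
structure Typical (f : C(UI, ℝ)) : Prop where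
  no_increase : ∀ σ : ℝ, (σ = 1 ∨ σ = -1) → ∀ n : ℕ, f ∉ increaseSet σ (1 / ((n:ℝ) + 1))
  no_coincidence : ∀ σ τ : ℝ, (σ = 1 ∨ σ = -1) → (τ = 1 ∨ τ = -1) → ∀ a b c d : ℚ,
    Disjoint (ratIcc a b) (ratIcc c d) → f ∉ coincidenceSet σ τ (ratIcc a b) (ratIcc c d)

lemma typical_mem_residual : {f | Typical f} ∈ residual C(UI, ℝ) := by
  have hS : ({1, -1} : Set ℝ).Countable := by simp
  have h1 : ∀ᶠ f in residual C(UI, ℝ), ∀ σ ∈ ({1, -1} : Set ℝ), ∀ n : ℕ,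
      f ∉ increaseSet σ (1 / ((n:ℝ) + 1)) := by
    refine (eventually_countable_ball hS).2 fun σ hσ => eventually_countable_forall.2 fun n => ?_
    exact compl_increaseSet_mem_residual (by simpa using hσ) (by positivity)
  have h2 : ∀ᶠ f in residual C(UI, ℝ), ∀ σ ∈ ({1, -1} : Set ℝ), ∀ τ ∈ ({1, -1} : Set ℝ),
      ∀ a b c d : ℚ, Disjoint (ratIcc a b) (ratIcc c d) →
        f ∉ coincidenceSet σ τ (ratIcc a b) (ratIcc c d) := by
    refine (eventually_countable_ball hS).2 fun σ hσ => (eventually_countable_ball hS).2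
      fun τ hτ => eventually_countable_forall.2 fun a => eventually_countable_forall.2 fun b =>
      eventually_countable_forall.2 fun c => eventually_countable_forall.2 fun d =>
      eventually_countable_forall.2 fun hd => ?_
    exact compl_coincidenceSet_mem_residual (by simpa using hσ) (by simpa using hτ)
      (isClosed_ratIcc a b) (isClosed_ratIcc c d) hd
  filter_upwards [h1, h2] with f h1 h2
  exact ⟨fun σ hσ => h1 σ (by simpa using hσ),
    fun σ τ hσ hτ => h2 σ (by simpa using hσ) τ (by simpa using hτ)⟩

/-! ### Isolated points of level sets are local extrema -/

lemma exists_eq_of_le_of_le (f : C(UI, ℝ)) {u v : UI} {y : ℝ} (hu : f u ≤ y) (hv : y ≤ f v) :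
    ∃ w : UI, min u v ≤ w ∧ w ≤ max u v ∧ f w = y := by
  have hc : Continuous (Set.IccExtend (zero_le_one (α := ℝ)) f) := f.continuous.Icc_extend'
  have h := intermediate_value_uIcc (a := (u:ℝ)) (b := v) hc.continuousOn
  rw [Set.IccExtend_val, Set.IccExtend_val] at h
  obtain ⟨w, hw, hfw⟩ := h (Set.mem_uIcc.2 (Or.inl ⟨hu, hv⟩))
  have hw01 : w ∈ Set.Icc (0:ℝ) 1 := by
    rw [Set.mem_uIcc] at hw
    rcases hw with hw | hw
    · exact ⟨u.2.1.trans hw.1, hw.2.trans v.2.2⟩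
    · exact ⟨v.2.1.trans hw.1, hw.2.trans u.2.2⟩
  rw [Set.IccExtend_of_mem _ _ hw01] at hfw
  refine ⟨⟨w, hw01⟩, ?_, ?_, hfw⟩
  · rw [Set.mem_uIcc] at hw
    rcases hw with hw | hw
    · exact min_le_of_left_le hw.1
    · exact min_le_of_right_le hw.1
  · rw [Set.mem_uIcc] at hw
    rcases hw with hw | hw
    · exact le_max_of_le_right hw.2
    · exact le_max_of_le_left hw.2

namespace Typical

variable {f : C(UI, ℝ)}

lemma not_increase (hf : Typical f) {σ δ : ℝ} (hσ : σ = 1 ∨ σ = -1) (hδ : 0 < δ) (x : UI)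
    (hl : ∀ z : UI, |(z:ℝ) - x| < δ → z < x → σ * f z ≤ σ * f x)
    (hr : ∀ z : UI, |(z:ℝ) - x| < δ → x < z → σ * f x ≤ σ * f z) : False := by
  obtain ⟨n, hn⟩ := exists_nat_one_div_lt hδ
  refine hf.no_increase σ hσ n ⟨x, fun z h1 h2 => ?_, fun z h1 h2 => ?_⟩
  · rcases h2.eq_or_lt with rfl | h
    · exact le_rfl
    · have h' : (z:ℝ) < x := h
      exact hl z (by rw [abs_lt]; constructor <;> linarith) h
  · rcases h1.eq_or_lt with rfl | h
    · exact le_rfl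
    · have h' : (x:ℝ) < z := h
      exact hr z (by rw [abs_lt]; constructor <;> linarith) h

/-- An isolated point of a level set is a local extremum: otherwise the graph would cross the level
there, which makes it a point of increase or decrease. -/
lemma extr_of_isolated (hf : Typical f) {δ : ℝ} (hδ : 0 < δ) {p : UI}
    (hp : ∀ z : UI, |(z:ℝ) - p| < δ → f z = f p → z = p) :
    ∃ σ : ℝ, (σ = 1 ∨ σ = -1) ∧ ∀ z : UI, |(z:ℝ) - p| < δ → σ * f z ≤ σ * f p := by
  by_contra! hcon
  obtain ⟨u, hu, hu'⟩ := hcon 1 (Or.inl rfl)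
  obtain ⟨v, hv, hv'⟩ := hcon (-1) (Or.inr rfl)
  have hu' : f p < f u := by linarith
  have hv' : f v < f p := by linarith
  -- values on one side of `p` cannot lie on both sides of the level
  have left : ∀ v u : UI, |(v:ℝ) - p| < δ → |(u:ℝ) - p| < δ → v < p → u < p →
      f v < f p → f p < f u → False := by
    intro v u hv hu hvp hup h1 h2
    obtain ⟨w, hw1, hw2, hw⟩ := exists_eq_of_le_of_le f h1.le h2.le
    have hwp : w < p := hw2.trans_lt (max_lt hvp hup)
    have : |(w:ℝ) - p| < δ := by
      rw [abs_lt] at hv hu ⊢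
      have h3 : (w:ℝ) < p := hwp
      rcases min_le_iff.1 hw1 with h | h
      · have h4 : (v:ℝ) ≤ w := h
        constructor <;> linarith
      · have h4 : (u:ℝ) ≤ w := h
        constructor <;> linarith
    exact hwp.ne (hp w this hw)
  have right : ∀ v u : UI, |(v:ℝ) - p| < δ → |(u:ℝ) - p| < δ → p < v → p < u →
      f v < f p → f p < f u → False := by
    intro v u hv hu hvp hup h1 h2
    obtain ⟨w, hw1, hw2, hw⟩ := exists_eq_of_le_of_le f h1.le h2.le
    have hwp : p < w := (lt_min hvp hup).trans_le hw1
    have : |(w:ℝ) - p| < δ := by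
      rw [abs_lt] at hv hu ⊢
      have h3 : (p:ℝ) < w := hwp
      rcases le_max_iff.1 hw2 with h | h
      · have h4 : (w:ℝ) ≤ v := h
        constructor <;> linarith
      · have h4 : (w:ℝ) ≤ u := h
        constructor <;> linarith
    exact hwp.ne' (hp w this hw)
  have hup : u ≠ p := by rintro rfl; exact lt_irrefl _ hu'
  have hvp : v ≠ p := by rintro rfl; exact lt_irrefl _ hv'
  rcases lt_or_gt_of_ne hup with hup | hup <;> rcases lt_or_gt_of_ne hvp with hvp | hvp
  · exact left v u hv hu hvp hup hv' hu'
  · refine hf.not_increase (σ := -1) (Or.inr rfl) hδ p (fun z hz hzp => ?_) (fun z hz hzp => ?_)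
    · by_contra! h
      exact left z u hz hu hzp hup (by linarith) hu'
    · by_contra! h
      exact right v z hv hz hvp hzp hv' (by linarith)
  · refine hf.not_increase (σ := 1) (Or.inl rfl) hδ p (fun z hz hzp => ?_) (fun z hz hzp => ?_)
    · by_contra! h
      exact left v z hv hz hvp hzp hv' (by linarith)
    · by_contra! h
      exact right z u hz hu hzp hup (by linarith) hu'
  · exact right v u hv hu hvp hup hv' hu'

end Typical

/-! ### Level sets of a typical function -/

lemma exists_ratIcc {δ : ℝ} (hδ : 0 < δ) (p : UI) :
    ∃ a b : ℚ, p ∈ ratIcc a b ∧ ∀ z ∈ ratIcc a b, |(z:ℝ) - p| < δ := by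
  obtain ⟨a, ha1, ha2⟩ := exists_rat_btwn (show (p:ℝ) - δ < p by linarith)
  obtain ⟨b, hb1, hb2⟩ := exists_rat_btwn (show (p:ℝ) < p + δ by linarith)
  refine ⟨a, b, ⟨ha2.le, hb1.le⟩, fun z hz => ?_⟩
  rw [abs_lt]
  constructor <;> linarith [hz.1, hz.2]

namespace Typical

variable {f : C(UI, ℝ)}

/-- Distinct local extrema have distinct values. -/
lemma extr_unique (hf : Typical f) {σ τ δ : ℝ} (hσ : σ = 1 ∨ σ = -1) (hτ : τ = 1 ∨ τ = -1)
    (hδ : 0 < δ) {p q : UI} (hp : ∀ z : UI, |(z:ℝ) - p| < δ → σ * f z ≤ σ * f p)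
    (hq : ∀ z : UI, |(z:ℝ) - q| < δ → τ * f z ≤ τ * f q) (hpq : f p = f q) : p = q := by
  by_contra hne
  have hne' : 0 < |(p:ℝ) - q| := abs_pos.2 (sub_ne_zero.2 fun h => hne (Subtype.ext h))
  have hδ' : 0 < min δ (|(p:ℝ) - q| / 2) := lt_min hδ (half_pos hne')
  obtain ⟨a, b, hpI, hI⟩ := exists_ratIcc hδ' p
  obtain ⟨c, d, hqJ, hJ⟩ := exists_ratIcc hδ' q
  refine hf.no_coincidence σ τ hσ hτ a b c d ?_ ⟨p, q,
    ⟨hpI, fun z hz => hp z ((hI z hz).trans_le (min_le_left _ _))⟩,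
    ⟨hqJ, fun z hz => hq z ((hJ z hz).trans_le (min_le_left _ _))⟩, hpq⟩
  rw [Set.disjoint_left]
  intro z h1 h2
  have h1 := (hI z h1).trans_le (min_le_right _ _)
  have h2 := (hJ z h2).trans_le (min_le_right _ _)
  have := abs_sub_le (p:ℝ) z q
  rw [abs_sub_comm (p:ℝ) z] at this
  linarith

lemma level_isNowhereDense (hf : Typical f) (y : ℝ) : IsNowhereDense (f ⁻¹' {y}) := by
  rw [IsNowhereDense, (isClosed_singleton.preimage f.continuous).closure_eq,
    Set.eq_empty_iff_forall_notMem]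
  intro x hx
  obtain ⟨δ, hδ, hball⟩ := Metric.mem_nhds_iff.1 (mem_interior_iff_mem_nhds.1 hx)
  have hc : ∀ z : UI, |(z:ℝ) - x| < δ → f z = y := fun z hz => hball hz
  have hx' : f x = y := hball (Metric.mem_ball_self hδ)
  exact hf.not_increase (σ := 1) (Or.inl rfl) hδ x
    (fun z hz _ => by rw [hc z hz, hx']) (fun z hz _ => by rw [hc z hz, hx'])

end Typical

/-- `p` is an isolated point of its own level set. -/
def IsolatedInLevel (f : C(UI, ℝ)) (p : UI) : Prop :=
  ∃ δ > 0, ∀ z : UI, |(z:ℝ) - p| < δ → f z = f p → z = p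

lemma accPt_of_not_isolated {f : C(UI, ℝ)} {p : UI} (h : ¬ IsolatedInLevel f p) :
    AccPt p (Filter.principal (f ⁻¹' {f p})) := by
  rw [accPt_iff_nhds]
  intro U hU
  obtain ⟨δ, hδ, hball⟩ := Metric.mem_nhds_iff.1 hU
  by_contra! hcon
  exact h ⟨δ, hδ, fun z hz hfz => hcon z ⟨hball hz, hfz⟩⟩

namespace Typical

variable {f : C(UI, ℝ)}

lemma isolated_unique (hf : Typical f) {p q : UI} (hp : IsolatedInLevel f p)
    (hq : IsolatedInLevel f q) (hpq : f p = f q) : p = q := by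
  obtain ⟨δ, hδ, h⟩ := hp
  obtain ⟨δ', hδ', h'⟩ := hq
  obtain ⟨σ, hσ, hs⟩ := hf.extr_of_isolated hδ h
  obtain ⟨τ, hτ, ht⟩ := hf.extr_of_isolated hδ' h'
  exact hf.extr_unique hσ hτ (lt_min hδ hδ') (fun z hz => hs z (hz.trans_le (min_le_left _ _)))
    (fun z hz => ht z (hz.trans_le (min_le_right _ _))) hpq

/-- The value at an isolated point is the extremum over an interval with rational endpoints, and an
interval has
only one maximum value and one minimum value. -/
lemma countable_isolated_values (hf : Typical f) :
    {y | ∃ p, IsolatedInLevel f p ∧ f p = y}.Countable := by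
  have hS : ({1, -1} : Set ℝ).Countable := by simp
  have : (⋃ σ ∈ ({1, -1} : Set ℝ), ⋃ a : ℚ, ⋃ b : ℚ,
      {y | ∃ p, ExtrAt σ (ratIcc a b) f p ∧ f p = y}).Countable := by
    refine hS.biUnion fun σ hσ => Set.countable_iUnion fun a => Set.countable_iUnion fun b =>
      Set.Subsingleton.countable ?_
    rintro _ ⟨p, hp, rfl⟩ _ ⟨q, hq, rfl⟩
    exact hp.eq (by simpa using hσ) hq
  refine this.mono ?_
  rintro y ⟨p, ⟨δ, hδ, h⟩, rfl⟩
  obtain ⟨σ, hσ, hs⟩ := hf.extr_of_isolated hδ h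
  obtain ⟨a, b, hpI, hI⟩ := exists_ratIcc hδ p
  simp only [Set.mem_iUnion]
  exact ⟨σ, by simpa using hσ, a, b, p, ⟨hpI, fun z hz => hs z (hI z hz)⟩, rfl⟩

/-- If a level set is a single point, its level is the minimum or the maximum. -/
lemma extr_of_level_singleton (hf : Typical f) {p : UI} (h : ∀ z, f z = f p → z = p) :
    (∀ z, f z ≤ f p) ∨ (∀ z, f p ≤ f z) := by
  have hd : ∀ z : UI, |(z:ℝ) - p| < 2 := fun z => by
    rw [abs_lt]; constructor <;> linarith [z.2.1, z.2.2, p.2.1, p.2.2]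
  obtain ⟨σ, hσ, hs⟩ := hf.extr_of_isolated (δ := 2) two_pos fun z _ => h z
  rcases hσ with rfl | rfl
  · exact Or.inl fun z => by linarith [hs z (hd z)]
  · exact Or.inr fun z => by linarith [hs z (hd z)]

/-- Removing the isolated point from an exceptional level set leaves a perfect set. -/
lemma perfect_diff (hf : Typical f) {p : UI} (hp : IsolatedInLevel f p) :
    Perfect (f ⁻¹' {f p} \ {p}) := by
  have hclosed : IsClosed (f ⁻¹' {f p}) := isClosed_singleton.preimage f.continuous
  constructor
  · obtain ⟨δ, hδ, h⟩ := hp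
    have e : f ⁻¹' {f p} \ {p} = f ⁻¹' {f p} \ Metric.ball p δ := by
      ext z
      refine and_congr_right fun hz => not_congr ⟨?_, fun hb => h z hb hz⟩
      rintro rfl
      exact Metric.mem_ball_self hδ
    rw [e]
    exact hclosed.sdiff Metric.isOpen_ball
  · rintro x ⟨hx, hxp⟩
    have hx : f x = f p := hx
    have hacc := accPt_of_not_isolated fun h => hxp (hf.isolated_unique h hp hx)
    rw [accPt_iff_nhds] at hacc ⊢
    intro U hU
    obtain ⟨z, ⟨hzU, hz⟩, hzx⟩ := hacc (U ∩ {p}ᶜ)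
      (Filter.inter_mem hU (isOpen_compl_singleton.mem_nhds hxp))
    exact ⟨z, ⟨hzU.1, by rw [← hx]; exact hz, hzU.2⟩, hzx⟩

end Typical

/-- **Bruckner–Garg theorem**: for a typical (residual) continuous function `f` on `[0,1]`,
the level sets at the minimum and maximum values are singletons, all but countably many
intermediate level sets are nonempty perfect nowhere dense sets, and each of the countably
many remaining intermediate level sets is a nonempty perfect nowhere dense set together
with one extra isolated point. -/
theorem bruckner_garg :
    ∃ G : Set C(Set.Icc (0:ℝ) 1, ℝ), G ∈ residual C(Set.Icc (0:ℝ) 1, ℝ) ∧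
      ∀ f ∈ G,
        (∃ a : Set.Icc (0:ℝ) 1, f ⁻¹' {sInf (Set.range f)} = {a}) ∧
        (∃ b : Set.Icc (0:ℝ) 1, f ⁻¹' {sSup (Set.range f)} = {b}) ∧
        ∃ C : Set ℝ, C.Countable ∧ C ⊆ Set.Ioo (sInf (Set.range f)) (sSup (Set.range f)) ∧
          (∀ y ∈ Set.Ioo (sInf (Set.range f)) (sSup (Set.range f)), y ∉ C →
            (f ⁻¹' {y}).Nonempty ∧ Perfect (f ⁻¹' {y}) ∧ IsNowhereDense (f ⁻¹' {y})) ∧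
          (∀ y ∈ C, ∃ (P : Set (Set.Icc (0:ℝ) 1)) (p : Set.Icc (0:ℝ) 1),
            P.Nonempty ∧ Perfect P ∧ IsNowhereDense P ∧ p ∉ P ∧
              f ⁻¹' {y} = P ∪ {p}) := by
  refine ⟨{f | Typical f}, typical_mem_residual, fun f hf => ?_⟩
  have hf : Typical f := hf
  have hcpt : IsCompact (Set.range f) := isCompact_range f.continuous
  have hne : (Set.range f).Nonempty := Set.range_nonempty f
  have hm : ∀ z, sInf (Set.range f) ≤ f z := fun z => csInf_le hcpt.bddBelow ⟨z, rfl⟩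
  have hM : ∀ z, f z ≤ sSup (Set.range f) := fun z => le_csSup hcpt.bddAbove ⟨z, rfl⟩
  obtain ⟨a, ha⟩ := hcpt.sInf_mem hne
  obtain ⟨b, hb⟩ := hcpt.sSup_mem hne
  refine ⟨⟨a, ?_⟩, ⟨b, ?_⟩, {y | ∃ p, IsolatedInLevel f p ∧ f p = y} ∩
    Set.Ioo (sInf (Set.range f)) (sSup (Set.range f)),
    hf.countable_isolated_values.mono Set.inter_subset_left, Set.inter_subset_right, ?_, ?_⟩
  · refine Set.eq_singleton_iff_unique_mem.2 ⟨ha, fun z hz => ?_⟩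
    have hz : f z = sInf (Set.range f) := hz
    exact hf.extr_unique (σ := -1) (τ := -1) (Or.inr rfl) (Or.inr rfl) one_pos
      (fun w _ => by linarith [hm w]) (fun w _ => by linarith [hm w]) (hz.trans ha.symm)
  · refine Set.eq_singleton_iff_unique_mem.2 ⟨hb, fun z hz => ?_⟩
    have hz : f z = sSup (Set.range f) := hz
    exact hf.extr_unique (σ := 1) (τ := 1) (Or.inl rfl) (Or.inl rfl) one_pos
      (fun w _ => by linarith [hM w]) (fun w _ => by linarith [hM w]) (hz.trans hb.symm)
  · intro y hy hyC
    refine ⟨?_, ⟨isClosed_singleton.preimage f.continuous, ?_⟩, hf.level_isNowhereDense y⟩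
    · obtain ⟨w, -, -, hw⟩ := exists_eq_of_le_of_le f (ha.le.trans hy.1.le) (hy.2.le.trans hb.ge)
      exact ⟨w, hw⟩
    · rintro x rfl
      exact accPt_of_not_isolated fun h => hyC ⟨⟨x, h, rfl⟩, hy⟩
  · rintro _ ⟨⟨p, hp, rfl⟩, hy⟩
    refine ⟨f ⁻¹' {f p} \ {p}, p, ?_, hf.perfect_diff hp,
      (hf.level_isNowhereDense (f p)).mono Set.sdiff_subset, fun h => h.2 rfl, ?_⟩
    · by_contra hemp
      rw [Set.not_nonempty_iff_eq_empty, Set.sdiff_eq_empty] at hemp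
      rcases hf.extr_of_level_singleton fun z hz => hemp hz with h | h
      · linarith [h b, hy.2]
      · linarith [h a, hy.1]
    · rw [Set.sdiff_union_self]
      exact (Set.union_eq_self_of_subset_right (s := f ⁻¹' {f p})
        (Set.singleton_subset_iff.2 rfl)).symm
end

section
/- There exists a function f : ℝ → ℝ that is differentiable at every point of ℝ and is monotone on no nondegenerate interval: for every pair of real numbers a < b, f is neither monotone nondecreasing nor monotone nonincreasing on [a, b]. -/
/-!
A Köpcke function is obtained as `x ↦ g x - g (x - t)`, where `g` is a Pompeiu function and `t` is
a generic translation.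

Pompeiu function: let `q` enumerate a dense set, let `a n > 0` be summable fast enough, and put
`F x = x + ∑ a n * ∛(x - q n)`. As `(β³ - α³) = (β - α) (α² + αβ + β²)`, the slope of `F` between
`x` and `y` is `1 + ∑ a n / (α n² + α n β n + β n²)`, with `α n = ∛(x - q n)` and
`β n = ∛(y - q n)`. As `y → x`, this converges to a finite limit (by dominated convergence, since
`α² + αβ + β² ≥ 3/4 α²`) if `∑ a n / α n²` converges, and tends to `+∞` otherwise, in particular
at every `q n`. So the inverse `g` of `F` is everywhere differentiable with nonnegative derivative,
and `g' = 0` on the dense set `F (q n)`. It is strictly increasing, so `g' > 0` on a dense set.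

Generic translation: the zero set `Z` of `g'` is residual, because `g'` is a pointwise limit of
continuous functions. Let `E` be a countable dense subset of `{g' > 0}`. By the Baire category
theorem there is `t` with `e - t ∈ Z` and `e + t ∈ Z` for all `e ∈ E`. The derivative of
`g x - g (x - t)` is then positive on `E` and negative on `E + t`, and both sets are dense.
-/

open Filter Topology Set

namespace Koepcke

/-! ### The real cube root -/

theorem exists_cbrt (x : ℝ) : ∃ y : ℝ, y ^ 3 = x := by
  have h := abs_nonneg x
  refine mem_range_of_exists_le_of_exists_ge (continuous_pow 3)
    ⟨-(1 + |x|), ?_⟩ ⟨1 + |x|, ?_⟩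
  · nlinarith [neg_abs_le x, pow_nonneg h 2, pow_nonneg h 3]
  · nlinarith [le_abs_self x, pow_nonneg h 2, pow_nonneg h 3]

/-- The real cube root, odd on all of `ℝ` (unlike `Real.rpow` with exponent `1/3`). -/
noncomputable def cbrt (x : ℝ) : ℝ := (exists_cbrt x).choose

theorem cbrt_pow (x : ℝ) : cbrt x ^ 3 = x := (exists_cbrt x).choose_spec

theorem cube_strictMono : StrictMono (fun x : ℝ => x ^ 3) :=
  Odd.strictMono_pow (by decide)

theorem cbrt_strictMono : StrictMono cbrt := by
  intro x y h
  apply cube_strictMono.lt_iff_lt.1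
  simpa only [cbrt_pow] using h

theorem cbrt_continuous : Continuous cbrt :=
  cbrt_strictMono.monotone.continuous_of_surjective fun x =>
    ⟨x ^ 3, cube_strictMono.injective (cbrt_pow _)⟩

theorem cbrt_ne_zero {x : ℝ} (h : x ≠ 0) : cbrt x ≠ 0 := by
  intro h0
  apply h
  rw [← cbrt_pow x, h0]
  norm_num

theorem cbrt_zero : cbrt 0 = 0 := by
  have := cbrt_pow 0
  exact pow_eq_zero_iff (by norm_num) |>.1 this

theorem abs_cbrt_le (x : ℝ) : |cbrt x| ≤ 1 + |x| := by
  have h : |cbrt x| ^ 3 = |x| := by rw [← abs_pow, cbrt_pow]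
  by_contra! hc
  nlinarith [abs_nonneg x, abs_nonneg (cbrt x), sq_nonneg (|cbrt x|), sq_nonneg (|cbrt x| - 1)]

/-- The denominator `α² + αβ + β²` of the slope of the cube root, where `α = ∛x` and `β = ∛y`. -/
noncomputable def den (x y : ℝ) : ℝ := cbrt x ^ 2 + cbrt x * cbrt y + cbrt y ^ 2

theorem den_nonneg (x y : ℝ) : 0 ≤ den x y := by
  unfold den
  nlinarith [sq_nonneg (cbrt x + cbrt y), sq_nonneg (cbrt x), sq_nonneg (cbrt y)]

theorem le_den (x y : ℝ) : 3 / 4 * cbrt x ^ 2 ≤ den x y := by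
  unfold den
  nlinarith [sq_nonneg (cbrt x + 2 * cbrt y)]

theorem cbrt_sub_eq {x y : ℝ} (h : x ≠ y) : cbrt y - cbrt x = (y - x) * (den x y)⁻¹ := by
  have h1 : (cbrt y - cbrt x) * den x y = y - x := by
    conv_rhs => rw [← cbrt_pow y, ← cbrt_pow x]
    unfold den
    ring
  have h2 : den x y ≠ 0 := by
    intro h0
    rw [h0, mul_zero] at h1
    exact h (sub_eq_zero.1 h1.symm).symm
  rw [← h1, mul_assoc, mul_inv_cancel₀ h2, mul_one]

theorem den_continuous (x : ℝ) : Continuous (den x) := by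
  have := cbrt_continuous
  unfold den
  fun_prop

theorem den_self (x : ℝ) : den x x = 3 * cbrt x ^ 2 := by
  unfold den
  ring

/-! ### The inverse of the Pompeiu function -/

/-- A dense sequence of reals: the points at which `F` has infinite slope. -/
noncomputable def q : ℕ → ℝ := TopologicalSpace.denseSeq ℝ

/-- The weights; the factor `1 + |q n|` makes `∑ a n * ∛(x - q n)` converge locally uniformly. -/
noncomputable def a (n : ℕ) : ℝ := (1 / 2) ^ n / (1 + |q n|)

theorem a_pos (n : ℕ) : 0 < a n := by
  unfold a
  positivity

theorem norm_term_le {x C : ℝ} (hx : |x| ≤ C) (n : ℕ) :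
    ‖a n * cbrt (x - q n)‖ ≤ (1 / 2) ^ n * (1 + C) := by
  have h1 : |cbrt (x - q n)| ≤ (1 + |q n|) * (1 + C) := by
    have h2 := abs_cbrt_le (x - q n)
    have h3 := abs_sub x (q n)
    have h4 := mul_nonneg (abs_nonneg (q n)) ((abs_nonneg x).trans hx)
    linarith
  rw [norm_mul, Real.norm_of_nonneg (a_pos n).le, Real.norm_eq_abs]
  calc a n * |cbrt (x - q n)| ≤ a n * ((1 + |q n|) * (1 + C)) :=
        mul_le_mul_of_nonneg_left h1 (a_pos n).le
    _ = (1 / 2) ^ n * (1 + C) := by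
        unfold a
        field_simp

theorem summable_bound (C : ℝ) : Summable (fun n : ℕ => (1 / 2 : ℝ) ^ n * (1 + C)) :=
  summable_geometric_two.mul_right _

theorem summable_term (x : ℝ) : Summable (fun n => a n * cbrt (x - q n)) :=
  (summable_bound |x|).of_norm_bounded (norm_term_le le_rfl)

/-- The inverse of the Pompeiu function; the summand `x` makes it expand distances. -/
noncomputable def F (x : ℝ) : ℝ := x + ∑' n, a n * cbrt (x - q n)

theorem F_continuous : Continuous F := by
  have h : Continuous (fun x => ∑' n, a n * cbrt (x - q n)) := by
    rw [continuous_iff_continuousAt]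
    intro x
    have hs : ContinuousOn (fun x => ∑' n, a n * cbrt (x - q n)) (Icc (-(|x| + 1)) (|x| + 1)) := by
      refine continuousOn_tsum (fun n => ?_) (summable_bound (|x| + 1))
        (fun n y hy => norm_term_le (abs_le.2 hy) n)
      have := cbrt_continuous
      fun_prop
    apply hs.continuousAt
    apply Icc_mem_nhds
    · linarith [neg_abs_le x]
    · linarith [le_abs_self x]
  exact continuous_id.add h

/-- The singular part of the slope of `F` between `x` and `y`. -/
noncomputable def R (x y : ℝ) : ℝ := ∑' n, a n * (den (x - q n) (y - q n))⁻¹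

theorem term_nonneg (x y : ℝ) (n : ℕ) : 0 ≤ a n * (den (x - q n) (y - q n))⁻¹ :=
  mul_nonneg (a_pos n).le (inv_nonneg.2 (den_nonneg _ _))

theorem hasSum_R {x y : ℝ} (h : x ≠ y) :
    HasSum (fun n => a n * (den (x - q n) (y - q n))⁻¹) ((y - x)⁻¹ * (F y - y - (F x - x))) := by
  have h1 := ((summable_term y).hasSum.sub (summable_term x).hasSum).mul_left (y - x)⁻¹
  have h2 : ∀ z, ∑' n, a n * cbrt (z - q n) = F z - z := fun z => by simp [F]
  rw [h2, h2] at h1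
  have hyx : y - x ≠ 0 := sub_ne_zero.2 h.symm
  refine h1.congr_fun fun n => ?_
  rw [← mul_sub, cbrt_sub_eq (x := x - q n) (y := y - q n) (by simpa using h)]
  rw [show y - q n - (x - q n) = y - x by ring]
  field_simp

theorem F_sub {x y : ℝ} (h : x ≠ y) : F y - F x = (y - x) * (1 + R x y) := by
  have hyx : y - x ≠ 0 := sub_ne_zero.2 h.symm
  rw [R, (hasSum_R h).tsum_eq]
  field_simp
  ring

theorem R_nonneg (x y : ℝ) : 0 ≤ R x y := tsum_nonneg (term_nonneg x y)

theorem sub_le_F_sub {x y : ℝ} (h : x ≤ y) : y - x ≤ F y - F x := by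
  rcases h.eq_or_lt with rfl | h
  · simp
  · rw [F_sub h.ne]
    nlinarith [mul_nonneg (sub_nonneg.2 h.le) (R_nonneg x y)]

theorem F_strictMono : StrictMono F := fun x y h => by
  linarith [sub_le_F_sub h.le]

theorem F_surjective : Function.Surjective F := by
  apply F_continuous.surjective
  · apply tendsto_atTop_mono' _ _ (tendsto_atTop_add_const_right _ (F 0) tendsto_id)
    filter_upwards [eventually_ge_atTop 0] with x hx
    have := sub_le_F_sub hx
    simp only [id]
    linarith
  · apply tendsto_atBot_mono' _ _ (tendsto_atBot_add_const_right _ (F 0) tendsto_id)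
    filter_upwards [eventually_le_atBot 0] with x hx
    have := sub_le_F_sub hx
    simp only [id]
    linarith

theorem tendsto_term {x : ℝ} {n : ℕ} (h : cbrt (x - q n) ≠ 0) :
    Tendsto (fun y => a n * (den (x - q n) (y - q n))⁻¹) (𝓝[≠] x)
      (𝓝 (a n * (3 * cbrt (x - q n) ^ 2)⁻¹)) := by
  have h1 : Continuous (fun y => den (x - q n) (y - q n)) :=
    (den_continuous _).comp (continuous_id.sub continuous_const)
  have h2 := (h1.tendsto x).mono_left (nhdsWithin_le_nhds (s := {x}ᶜ))
  rw [den_self] at h2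
  exact (h2.inv₀ (by positivity)).const_mul _

/-- Where the formal derivative of `F` converges, it is the limit of the slopes. -/
theorem tendsto_R {x : ℝ} (h : ∀ n, cbrt (x - q n) ≠ 0)
    (hs : Summable (fun n => a n * (3 * cbrt (x - q n) ^ 2)⁻¹)) :
    Tendsto (R x) (𝓝[≠] x) (𝓝 (∑' n, a n * (3 * cbrt (x - q n) ^ 2)⁻¹)) := by
  refine tendsto_tsum_of_dominated_convergence (hs.mul_left 4) (fun n => tendsto_term (h n)) ?_
  refine Eventually.of_forall fun y n => ?_
  rw [Real.norm_of_nonneg (term_nonneg x y n)]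
  have h1 : 0 < cbrt (x - q n) ^ 2 := by have := h n; positivity
  have h2 : (den (x - q n) (y - q n))⁻¹ ≤ (3 / 4 * cbrt (x - q n) ^ 2)⁻¹ :=
    inv_anti₀ (by positivity) (le_den _ _)
  calc _ ≤ a n * (3 / 4 * cbrt (x - q n) ^ 2)⁻¹ := mul_le_mul_of_nonneg_left h2 (a_pos n).le
    _ = 4 * (a n * (3 * cbrt (x - q n) ^ 2)⁻¹) := by
      field_simp

theorem tendsto_R_q (n : ℕ) : Tendsto (R (q n)) (𝓝[≠] (q n)) atTop := by
  have h1 : Continuous (fun y => den (q n - q n) (y - q n)) :=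
    (den_continuous _).comp (continuous_id.sub continuous_const)
  have h2 := (h1.tendsto (q n)).mono_left (nhdsWithin_le_nhds (s := {q n}ᶜ))
  have h0 : den (q n - q n) (q n - q n) = 0 := by simp [den_self, cbrt_zero]
  rw [h0] at h2
  have h3 : Tendsto (fun y => den (q n - q n) (y - q n)) (𝓝[≠] (q n)) (𝓝[>] 0) := by
    refine tendsto_nhdsWithin_iff.2 ⟨h2, ?_⟩
    filter_upwards [self_mem_nhdsWithin] with y hy
    have := cbrt_ne_zero (sub_ne_zero.2 hy)
    have h4 : den (q n - q n) (y - q n) = cbrt (y - q n) ^ 2 := by simp [den, cbrt_zero]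
    rw [mem_Ioi, h4]
    positivity
  refine tendsto_atTop_mono' _ ?_ (h3.inv_tendsto_nhdsGT_zero.const_mul_atTop (a_pos n))
  filter_upwards [self_mem_nhdsWithin] with y hy
  exact (hasSum_R (Ne.symm hy)).summable.le_tsum n (fun m _ => term_nonneg _ _ m)

/-- Where the formal derivative of `F` diverges, finite partial sums force infinite slope. -/
theorem tendsto_R_atTop {x : ℝ} (h : ∀ n, cbrt (x - q n) ≠ 0)
    (hs : ¬ Summable (fun n => a n * (3 * cbrt (x - q n) ^ 2)⁻¹)) :
    Tendsto (R x) (𝓝[≠] x) atTop := by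
  rw [tendsto_atTop]
  intro M
  obtain ⟨s, hM⟩ : ∃ s : Finset ℕ, M < ∑ n ∈ s, a n * (3 * cbrt (x - q n) ^ 2)⁻¹ := by
    by_contra! hc
    refine hs (summable_of_sum_le (fun n => ?_) hc)
    have := a_pos n
    positivity
  have h1 := tendsto_finsetSum s (fun n _ => tendsto_term (h n))
  filter_upwards [h1.eventually (lt_mem_nhds hM), self_mem_nhdsWithin] with y hy hxy
  exact hy.le.trans ((hasSum_R (Ne.symm hxy)).summable.sum_le_tsum s
    (fun m _ => term_nonneg _ _ m))

theorem exists_tendsto (x : ℝ) :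
    ∃ L, Tendsto (fun y => (1 + R x y)⁻¹) (𝓝[≠] x) (𝓝 L) := by
  by_cases h : ∀ n, cbrt (x - q n) ≠ 0
  · by_cases hs : Summable (fun n => a n * (3 * cbrt (x - q n) ^ 2)⁻¹)
    · have h0 : 0 ≤ ∑' n, a n * (3 * cbrt (x - q n) ^ 2)⁻¹ :=
        tsum_nonneg fun n => mul_nonneg (a_pos n).le (by positivity)
      exact ⟨_, ((tendsto_R h hs).const_add 1).inv₀ (by linarith)⟩
    · exact ⟨0, (tendsto_atTop_add_const_left _ 1 (tendsto_R_atTop h hs)).inv_tendsto_atTop⟩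
  · push Not at h
    obtain ⟨n, hn⟩ := h
    have hx : x = q n := by
      by_contra hne
      exact cbrt_ne_zero (sub_ne_zero.2 hne) hn
    subst hx
    exact ⟨0, (tendsto_atTop_add_const_left _ 1 (tendsto_R_q n)).inv_tendsto_atTop⟩

/-! ### The Pompeiu function -/

/-- A limit of reciprocal slopes of `F` is the derivative of its inverse. -/
theorem hasDerivAt_inverse {g : ℝ → ℝ} (hFg : ∀ z, F (g z) = z) {x L : ℝ}
    (h : Tendsto (fun y => (1 + R x y)⁻¹) (𝓝[≠] x) (𝓝 L)) : HasDerivAt g L (F x) := by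
  have hgF : ∀ x, g (F x) = x := fun x => F_strictMono.injective (hFg _)
  have hg : Continuous g := by
    refine Monotone.continuous_of_surjective (fun u v huv => ?_) (fun x => ⟨F x, hgF x⟩)
    rw [← F_strictMono.le_iff_le, hFg, hFg]
    exact huv
  have hne : ∀ z, z ≠ F x → g z ≠ x := fun z hz h => hz (by rw [← h, hFg])
  rw [hasDerivAt_iff_tendsto_slope]
  have h1 : Tendsto g (𝓝[≠] (F x)) (𝓝[≠] x) := by
    refine tendsto_nhdsWithin_iff.2 ⟨?_, ?_⟩
    · have := (hg.tendsto (F x)).mono_left (nhdsWithin_le_nhds (s := {F x}ᶜ))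
      rwa [hgF] at this
    · filter_upwards [self_mem_nhdsWithin] with z hz
      exact hne z hz
  refine (h.comp h1).congr' ?_
  filter_upwards [self_mem_nhdsWithin] with z hz
  have h2 := F_sub (Ne.symm (hne z hz))
  have h3 : g z - x ≠ 0 := sub_ne_zero.2 (hne z hz)
  rw [hFg] at h2
  have h4 := R_nonneg x (g z)
  simp only [Function.comp, slope_def_field, hgF]
  rw [h2]
  field_simp

theorem exists_pompeiu : ∃ g : ℝ → ℝ, Differentiable ℝ g ∧ StrictMono g ∧
    Dense {x | deriv g x = 0} := by
  choose g hFg using F_surjective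
  refine ⟨g, fun z => ?_, fun u v huv => ?_, ?_⟩
  · obtain ⟨L, hL⟩ := exists_tendsto (g z)
    have := hasDerivAt_inverse hFg hL
    rw [hFg] at this
    exact this.differentiableAt
  · rw [← F_strictMono.lt_iff_lt, hFg, hFg]
    exact huv
  · have h1 : DenseRange (F ∘ q) :=
      F_surjective.denseRange.comp (TopologicalSpace.denseRange_denseSeq ℝ) F_continuous
    refine Dense.mono ?_ h1
    rintro _ ⟨n, rfl⟩
    exact (hasDerivAt_inverse hFg
      (tendsto_atTop_add_const_left _ 1 (tendsto_R_q n)).inv_tendsto_atTop).deriv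

/-! ### Genericity -/

/-- A dense zero set of the derivative of a monotone function is automatically residual. -/
theorem zeros_residual {g : ℝ → ℝ} (hg : Differentiable ℝ g) (hm : Monotone g)
    (hd : Dense {x | deriv g x = 0}) : {x | deriv g x = 0} ∈ residual ℝ := by
  -- difference quotients with step `1 / (n + 1)`
  let s : ℕ → ℝ → ℝ := fun n x => ((n : ℝ) + 1) * (g (x + 1 / ((n : ℝ) + 1)) - g x)
  have hs : ∀ n, Continuous (s n) := fun n => by
    have := hg.continuous
    fun_prop
  have hlim : ∀ x, Tendsto (fun n => s n x) atTop (𝓝 (deriv g x)) := fun x => by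
    have h1 := (hg x).hasDerivAt.tendsto_slope_zero_right
    have h2 : Tendsto (fun n : ℕ => 1 / ((n : ℝ) + 1)) atTop (𝓝[>] 0) :=
      tendsto_nhdsWithin_iff.2 ⟨tendsto_one_div_add_atTop_nhds_zero_nat,
        Eventually.of_forall fun n => by simp only [mem_Ioi]; positivity⟩
    refine (h1.comp h2).congr fun n => ?_
    simp [s]
  let U : ℕ × ℕ → Set ℝ := fun p => ⋃ n ≥ p.1, {x | s n x < 1 / ((p.2 : ℝ) + 1)}
  have hU : (⋂ p, U p) ∈ residual ℝ := by
    refine (countable_iInter_mem).2 fun p => residual_of_dense_open ?_ ?_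
    · exact isOpen_biUnion fun n _ => isOpen_lt (hs n) continuous_const
    · refine hd.mono fun x hx => ?_
      have h1 := hlim x
      rw [show deriv g x = 0 from hx] at h1
      have h2 : (0 : ℝ) < 1 / ((p.2 : ℝ) + 1) := by positivity
      obtain ⟨n, hn, hn'⟩ := ((h1.eventually (gt_mem_nhds h2)).and (eventually_ge_atTop p.1)).exists
      exact mem_biUnion hn' hn
  refine mem_of_superset hU fun x hx => ?_
  refine le_antisymm (le_of_not_gt fun hpos => ?_) (hm.deriv_nonneg)
  obtain ⟨k, hk⟩ := exists_nat_one_div_lt hpos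
  obtain ⟨N, hN⟩ := eventually_atTop.1 ((hlim x).eventually (lt_mem_nhds hk))
  have h1 := mem_iInter.1 hx (N, k)
  simp only [U, mem_iUnion, mem_ofPred_eq] at h1
  obtain ⟨n, hn, hlt⟩ := h1
  exact absurd hlt (hN n hn).le.not_gt

theorem dense_deriv_pos {g : ℝ → ℝ} (hg : Differentiable ℝ g) (hm : StrictMono g) :
    Dense {x | 0 < deriv g x} := by
  refine dense_of_exists_between fun {u v} huv => ?_
  obtain ⟨c, hc, h⟩ := exists_deriv_eq_slope g huv hg.continuous.continuousOn
    hg.differentiableOn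
  refine ⟨c, ?_, hc⟩
  rw [mem_ofPred_eq, h]
  exact div_pos (sub_pos.2 (hm huv)) (sub_pos.2 huv)

theorem exists_translation {Z E : Set ℝ} (hZ : Z ∈ residual ℝ) (hE : E.Countable) :
    ∃ t, ∀ e ∈ E, e - t ∈ Z ∧ e + t ∈ Z := by
  have h : ∀ᶠ t in residual ℝ, ∀ e ∈ E, e - t ∈ Z ∧ e + t ∈ Z := by
    refine (eventually_countable_ball hE).2 fun e _ => Eventually.and ?_ ?_
    · exact (tendsto_residual_of_isOpenMap (Homeomorph.subLeft e).continuous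
        (Homeomorph.subLeft e).isOpenMap).eventually hZ
    · exact (tendsto_residual_of_isOpenMap (Homeomorph.addLeft e).continuous
        (Homeomorph.addLeft e).isOpenMap).eventually hZ
  exact (dense_of_mem_residual h).nonempty

theorem not_antitoneOn {f : ℝ → ℝ} (hd : Dense {x | 0 < deriv f x}) {u v : ℝ} (huv : u < v) :
    ¬ AntitoneOn f (Icc u v) := by
  intro hm
  obtain ⟨c, hc, hpos⟩ := hd.inter_open_nonempty _ isOpen_Ioo (nonempty_Ioo.2 huv)
  have h1 : derivWithin f (Icc u v) c ≤ 0 := hm.derivWithin_nonpos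
  rw [derivWithin_of_mem_nhds (Icc_mem_nhds hc.1 hc.2)] at h1
  exact absurd hpos h1.not_gt

end Koepcke

open Koepcke in
/-- There exists an everywhere differentiable function `f : ℝ → ℝ` that is monotone on no
nondegenerate interval (a **Köpcke function**). -/
theorem exists_koepcke_function :
    ∃ f : ℝ → ℝ, (∀ x : ℝ, DifferentiableAt ℝ f x) ∧
      ∀ a b : ℝ, a < b →
        ¬ MonotoneOn f (Set.Icc a b) ∧ ¬ AntitoneOn f (Set.Icc a b) := by
  obtain ⟨g, hg, hm, hz⟩ := exists_pompeiu
  obtain ⟨E, hEpos, hEc, hEd⟩ := (dense_deriv_pos hg hm).exists_countable_dense_subset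
  obtain ⟨t, ht⟩ := exists_translation (zeros_residual hg hm.monotone hz) hEc
  have hd : ∀ x, HasDerivAt (fun x => g x - g (x - t)) (deriv g x - deriv g (x - t)) x :=
    fun x => (hg x).hasDerivAt.sub ((hg (x - t)).hasDerivAt.comp_sub_const x t)
  refine ⟨fun x => g x - g (x - t), fun x => (hd x).differentiableAt, fun u v huv => ⟨?_, ?_⟩⟩
  · intro hmono
    have hEt : Dense ((fun e => e + t) '' E) :=
      (Homeomorph.addRight t).surjective.denseRange.dense_image
        (Homeomorph.addRight t).continuous hEd
    refine not_antitoneOn (hEt.mono ?_) huv hmono.neg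
    rintro _ ⟨e, he, rfl⟩
    have h1 : 0 < deriv g e := hEpos he
    have h2 : deriv g (e + t) = 0 := (ht e he).2
    have h3 := (hd (e + t)).neg.deriv
    rw [h2, add_sub_cancel_right, zero_sub, neg_neg] at h3
    exact h1.trans_eq h3.symm
  · refine not_antitoneOn (hEd.mono fun e he => ?_) huv
    have h1 : 0 < deriv g e := hEpos he
    have h2 : deriv g (e - t) = 0 := (ht e he).1
    have h3 := (hd e).deriv
    rw [h2, sub_zero] at h3
    exact h1.trans_eq h3.symm
end

section
/- Every compact Hausdorff first-countable topological space X has cardinality at most 𝔠 = 2^ℵ₀. -/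
/-!
The proof is the closing-off argument, arranged so that no transfinite recursion is needed.

Fix for each point `x` a countable neighbourhood basis `B x 0, B x 1, …`. Consider operations that
turn a sequence of points into a point: one sends a convergent sequence to its limit, and, for each
`g : ℕ → ℕ`, another sends `s` to some point outside `⋃ i, B (s i) (g i)`, if there is one. These
are `𝔠` many operations of countable arity, so some nonempty set `M` with at most `𝔠` points is
stable under all of them (`exists_stable_set_card_le_continuum`: the values of well-founded,
countably branching terms, of which there are only `𝔠` many because `𝔠 ^ ℵ₀ = 𝔠`).

Stability under limits makes `M` sequentially closed, hence closed by first countability, hence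
compact. If some `y` were not in `M`, every `x ∈ M` would have a basic neighbourhood `B x (n x)`
missing `y`, and finitely many of these would cover `M`. Their union misses `y`, so the
corresponding operation produces a point of `M` outside that union, a contradiction. So `M` is the
whole space.
-/

open Cardinal in
/-- At most `𝔠` many operations of countable arity have a nonempty common stable set of cardinality
at most `𝔠`. -/
lemma exists_stable_set_card_le_continuum {X : Type*} [Nonempty X] {I : Type}
    (hI : #I ≤ 𝔠) (op : I → (ℕ → X) → X) :
    ∃ M : Set X, M.Nonempty ∧ #M ≤ 𝔠 ∧ ∀ i s, (∀ n, s n ∈ M) → op i s ∈ M := by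
  classical
  obtain ⟨x₀⟩ := ‹Nonempty X›
  -- Well-founded terms with a nullary symbol `none` for `x₀` and an `ℕ`-ary symbol for each `i : I`.
  let β : Option I → Type := fun o => o.elim Empty fun _ => ℕ
  let ev : WType β → X := WType.elim X fun p => match p with
    | ⟨none, _⟩ => x₀
    | ⟨some i, s⟩ => op i s
  refine ⟨Set.range ev, ⟨_, ⟨WType.mk none Empty.elim, rfl⟩⟩, ?_, ?_⟩
  · have hW : #(WType β) ≤ 𝔠 := by
      refine WType.cardinalMk_le_of_le ?_
      calc Cardinal.sum (fun o => 𝔠 ^ #(β o)) ≤ Cardinal.sum (fun _ : Option I => 𝔠) := by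
            refine Cardinal.sum_le_sum _ _ fun o => ?_
            cases o with
            | none => simpa [β] using (Cardinal.nat_lt_continuum 1).le
            | some i => simp [β]
        _ = #(Option I) * 𝔠 := by simp
        _ ≤ 𝔠 * 𝔠 := by
            gcongr
            rw [Cardinal.mk_option]
            exact Cardinal.add_le_of_le Cardinal.aleph0_le_continuum hI
              (by simpa using (Cardinal.nat_lt_continuum 1).le)
        _ = 𝔠 := Cardinal.continuum_mul_self
    have h := Cardinal.mk_range_le_lift (f := ev)
    rw [Cardinal.lift_uzero] at h
    exact h.trans (Cardinal.lift_le_continuum.2 hW)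
  · intro i s hs
    choose t ht using hs
    refine ⟨WType.mk (some i) t, ?_⟩
    change op i (fun n => ev (t n)) = op i s
    simp only [ht]

open Cardinal in
/-- **Arhangelskii's theorem** (special case): a compact Hausdorff first-countable space
has cardinality at most `𝔠 = 2^ℵ₀`. -/
theorem card_le_continuum_of_compact_firstCountable (X : Type*) [TopologicalSpace X]
    [CompactSpace X] [T2Space X] [FirstCountableTopology X] :
    Cardinal.mk X ≤ Cardinal.continuum := by
  classical
  cases isEmpty_or_nonempty X with
  | inl h => simp
  | inr h =>
  choose B hB using fun x : X => (nhds x).exists_antitone_basis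
  let op : Option (ℕ → ℕ) → (ℕ → X) → X := fun o s => o.elim (Filter.limUnder Filter.atTop s)
    fun g => Classical.epsilon fun z => z ∉ ⋃ i, B (s i) (g i)
  have hI : #(Option (ℕ → ℕ)) ≤ 𝔠 := by
    rw [Cardinal.mk_option]
    exact Cardinal.add_le_of_le Cardinal.aleph0_le_continuum (by simp)
      (by simpa using (Cardinal.nat_lt_continuum 1).le)
  obtain ⟨M, hne, hM, hop⟩ := exists_stable_set_card_le_continuum hI op
  have hseq : IsSeqClosed M := fun s a hs ha => by
    have := hop none s hs
    rwa [show op none s = a from ha.limUnder_eq] at this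
  have hc : IsCompact M := hseq.isClosed.isCompact
  suffices hu : M = Set.univ by rwa [hu, Cardinal.mk_univ] at hM
  by_contra hu
  obtain ⟨y, hy⟩ := (Set.ne_univ_iff_exists_notMem M).1 hu
  have hn : ∀ x, ∃ n, x ∈ M → y ∉ B x n := fun x => by
    by_cases hx : x ∈ M
    · have hxy : x ≠ y := fun h => hy (h ▸ hx)
      obtain ⟨n, -, hn⟩ := (hB x).1.mem_iff.1 (isOpen_ne.mem_nhds hxy : {z | z ≠ y} ∈ nhds x)
      exact ⟨n, fun _ h => hn h rfl⟩
    · exact ⟨0, fun h => absurd h hx⟩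
  choose n hn using hn
  obtain ⟨t, htM, hcov⟩ := hc.elim_nhds_subcover (fun x => B x (n x))
    fun x _ => (hB x).1.mem_of_mem trivial
  have htne : (t : Set X).Nonempty := by
    obtain ⟨x, hx⟩ := hne
    obtain ⟨z, hz, -⟩ := Set.mem_iUnion₂.1 (hcov hx)
    exact ⟨z, hz⟩
  obtain ⟨s, hs⟩ := t.countable_toSet.exists_eq_range htne
  have hst : ∀ i, s i ∈ t := fun i => by
    rw [← Finset.mem_coe, hs]
    exact Set.mem_range_self i
  have hmem := hop (some fun i => n (s i)) s fun i => htM _ (hst i)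
  -- The point `y` witnesses that the chosen point really avoids the union.
  have hout : op (some fun i => n (s i)) s ∉ ⋃ i, B (s i) (n (s i)) :=
    Classical.epsilon_spec (p := fun z => z ∉ ⋃ i, B (s i) (n (s i)))
      ⟨y, by simpa using fun i => hn _ (htM _ (hst i))⟩
  obtain ⟨x, hxt, hx⟩ := Set.mem_iUnion₂.1 (hcov hmem)
  rw [← Finset.mem_coe, hs] at hxt
  obtain ⟨i, rfl⟩ := hxt
  exact hout (Set.mem_iUnion.2 ⟨i, hx⟩)
end

section
/- Let X be a compact Hausdorff topological space that is homogeneous (for every pair of points x, y in X there is a homeomorphism of X onto itself carrying x to y) and countably tight (whenever a point x lies in the closure of a set A ⊆ X, there is a countable subset B ⊆ A with x in the closure of B). Then the cardinality of X is at most 2^𝔠, where 𝔠 = 2^ℵ₀. -/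
/-!
The proof shows that some point, hence by homogeneity every point, is the intersection of at most
`𝔠` open sets, and then runs Arhangel'skii's closing-off argument.

*A point of small pseudocharacter.* In a nonempty countably tight compactum some nonempty closed
`Gδ` set `H` lies in the closure of a countable set `D` (`exists_Gδ_subset_closure`): otherwise
one builds by recursion along `ω₁` points `x α` and decreasing closed `Gδ` sets `H α ∋ x α` with
`H α` disjoint from the closure of `{x β | β < α}`. By compactness there is a point `z` in the
closure of every tail of `x`; by countable tightness `z` is in the closure of some initial segment
`{x β | β < α}`, while `z ∈ H α`, a contradiction. A point `p ∈ H` is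
the intersection of the countably many open sets defining `H` and of the complements of those
`closure E`, `E ⊆ D`, that miss `p`; there are at most `𝔠` of these (`exists_pseudobase`).

*Closing off.* Let `U a j` (`j` in an index type of size `𝔠`) be open sets with intersection `{a}`.
Take `A ⊆ X` nonempty and closed under two families of operations on sequences `s : ℕ → A`:
limits of `s` along filters on `ℕ`, and, for `c : ℕ → J`, a point outside `⋃ i, U (s i) (c i)` if
there is one. There are at most `2 ^ 𝔠` operations, each of countable arity, so such an `A` of size
at most `2 ^ 𝔠` exists (`exists_closed_under`). By countable tightness the first family makes
`A` closed, hence compact. If `p ∉ A`, finitely many `U a j` missing `p` cover `A`, and the second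
family puts a point outside this cover into `A`, which is absurd. So `A = X`.
-/

open Set Filter Topology Cardinal

/-- If `κ ^ ℵ₀ = κ`, a family of at most `κ` operations of arity `ℕ` on a nonempty type has a
nonempty invariant set of size at most `κ`, namely the values of the terms generated by one
constant. -/
lemma exists_closed_under {X : Type*} [Nonempty X] {O : Type} (op : O → (ℕ → X) → X)
    (κ : Cardinal.{0}) (hκ : κ ^ ℵ₀ = κ) (h1 : ℵ₀ ≤ κ) (hO : #O ≤ κ) :
    ∃ A : Set X, A.Nonempty ∧ lift.{0} #A ≤ lift κ ∧
      ∀ (o : O) (s : ℕ → X), (∀ n, s n ∈ A) → op o s ∈ A := by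
  classical
  -- `none` is the constant and `some o` the operation `o`, whose arity is `ℕ`.
  let β : Option O → Type := fun o => o.elim Empty (fun _ => ℕ)
  let ev : WType β → X := fun w => WType.elim X
    (fun q : Σ a : Option O, (β a → X) => match q with
      | ⟨none, _⟩ => Classical.arbitrary X
      | ⟨some o, s⟩ => op o s) w
  have hW : #(WType β) ≤ κ := by
    apply WType.cardinalMk_le_of_le
    have hb : ∀ a : Option O, κ ^ #(β a) ≤ κ := by
      rintro (_ | o)
      · have : #(β none) = 0 := mk_eq_zero Empty
        rw [this, power_zero]
        exact one_le_aleph0.trans h1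
      · have : #(β (some o)) = ℵ₀ := mk_nat
        rw [this, hκ]
    calc (Cardinal.sum fun a : Option O => κ ^ #(β a))
        ≤ Cardinal.sum fun _ : Option O => κ := sum_le_sum _ _ hb
      _ = #(Option O) * κ := by simp
      _ ≤ κ * κ := by
        gcongr
        rw [mk_option]
        exact add_le_of_le h1 hO (one_le_aleph0.trans h1)
      _ = κ := mul_eq_self h1
  refine ⟨range ev, ⟨_, ⟨WType.mk none Empty.elim, rfl⟩⟩, ?_, ?_⟩
  · exact (mk_range_le_lift (f := ev)).trans (lift_le.2 hW)
  · intro o s hs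
    choose w hw using hs
    refine ⟨WType.mk (some o) w, ?_⟩
    have : s = fun n => ev (w n) := funext fun n => (hw n).symm
    rw [this]
    rfl

section

variable {X : Type*} [TopologicalSpace X] [CompactSpace X] [T2Space X]

lemma exists_closed_Gδ_disjoint (C : Set X) (hC : IsClosed C) (y : X) (hy : y ∉ C) :
    ∃ Z : Set X, IsClosed Z ∧ IsGδ Z ∧ y ∈ Z ∧ Disjoint Z C := by
  obtain ⟨f, h0, h1, -⟩ := exists_continuous_zero_one_of_isClosed
    (isClosed_singleton (x := y)) hC (by simpa using hy)
  refine ⟨f ⁻¹' {0}, isClosed_singleton.preimage f.continuous, ?_, h0 rfl, ?_⟩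
  · exact (isClosed_singleton.isGδ).preimage f.continuous
  · rw [Set.disjoint_left]
    intro z hz hzC
    have := h1 hzC
    simp_all

/-- A nonempty countably tight compactum has a nonempty closed `Gδ` set contained in the closure of
a countable set; otherwise it would contain a free sequence of length `ω₁`. -/
lemma exists_Gδ_subset_closure [Nonempty X]
    (htight : ∀ (A : Set X) (x : X), x ∈ closure A →
      ∃ B ⊆ A, B.Countable ∧ x ∈ closure B) :
    ∃ H D : Set X, IsGδ H ∧ H.Nonempty ∧ D.Countable ∧ H ⊆ closure D := by
  classical
  by_contra! hcon
  let I : Type := (ord (aleph 1)).ToType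
  have hIio : ∀ i : I, (Iio i).Countable := by
    intro i
    have hI1 : #I = aleph 1 := by simp [I]
    have h : #(Iio i) < Order.succ ℵ₀ :=
      (mk_Iio_lt i (by rw [hI1]; simp [I])).trans_eq (hI1.trans succ_aleph0.symm)
    exact le_aleph0_iff_set_countable.1 (Order.lt_succ_iff.1 h)
  have hI : ¬ Countable I := by
    intro h
    have h2 : #I ≤ ℵ₀ := mk_le_aleph0_iff.2 h
    have h3 : #I = aleph 1 := by simp [I]
    rw [h3] at h2
    exact absurd h2 (not_le.2 aleph0_lt_aleph_one)
  have hIic : ∀ i : I, (Iic i).Countable := by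
    intro i
    rw [← Iio_union_right]
    exact (hIio i).union (countable_singleton i)
  have hne : Nonempty I := by
    by_contra h
    rw [not_nonempty_iff] at h
    exact hI inferInstance
  -- `Good i r v`: the pair `v = (x i, H i)` correctly continues the pairs `r` chosen before `i`.
  let Good : ∀ i : I, ((j : I) → j < i → X × Set X) → X × Set X → Prop := fun i r v =>
    IsClosed v.2 ∧ IsGδ v.2 ∧ v.1 ∈ v.2 ∧ (∀ j (h : j < i), v.2 ⊆ (r j h).2) ∧
      Disjoint v.2 (closure {x | ∃ j, ∃ h : j < i, x = (r j h).1})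
  let F : ∀ i : I, ((j : I) → j < i → X × Set X) → X × Set X := fun i r =>
    if h : ∃ v, Good i r v then h.choose else (Classical.arbitrary X, ∅)
  let wf : WellFounded (fun a b : I => a < b) := wellFounded_lt
  let g : I → X × Set X := wf.fix F
  have hg : ∀ i, g i = F i (fun j _ => g j) := fun i => wf.fix_eq F i
  have good : ∀ i, Good i (fun j _ => g j) (g i) := by
    intro i
    induction i using wf.induction with
    | _ i ih =>
    have ih : ∀ j < i, Good j (fun j _ => g j) (g j) := ih
    suffices h : ∃ v, Good i (fun j _ => g j) v by
      have h2 : g i = h.choose := by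
        rw [hg i]
        exact dif_pos h
      rw [h2]
      exact h.choose_spec
    have hcount : Countable (Iio i) := (hIio i).to_subtype
    let K : Set X := ⋂ j : Iio i, (g j).2
    have hKc : IsClosed K := isClosed_iInter fun j => (ih j j.2).1
    have hKG : IsGδ K := IsGδ.iInter fun j => (ih j j.2).2.1
    have hKne : K.Nonempty := by
      by_cases he : Nonempty (Iio i)
      · apply IsCompact.nonempty_iInter_of_directed_nonempty_isCompact_isClosed
        · intro a b
          rcases lt_trichotomy (a : I) b with h | h | h
          · exact ⟨b, (ih b b.2).2.2.2.1 a h, subset_rfl⟩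
          · exact ⟨b, by simp only [h]; exact subset_rfl, subset_rfl⟩
          · exact ⟨a, subset_rfl, (ih a a.2).2.2.2.1 b h⟩
        · exact fun j => ⟨_, (ih j j.2).2.2.1⟩
        · exact fun j => (ih j j.2).1.isCompact
        · exact fun j => (ih j j.2).1
      · rw [not_nonempty_iff] at he
        simp [K]
    have hD : ({x | ∃ j, ∃ _ : j < i, x = (g j).1} : Set X).Countable := by
      refine ((hIio i).image fun j => (g j).1).mono ?_
      rintro x ⟨j, hj, rfl⟩
      exact ⟨j, hj, rfl⟩
    obtain ⟨y, hyK, hyD⟩ := Set.not_subset.1 (hcon K _ hKG hKne hD)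
    obtain ⟨Z, hZc, hZG, hyZ, hZd⟩ := exists_closed_Gδ_disjoint _ isClosed_closure y hyD
    refine ⟨(y, K ∩ Z), hKc.inter hZc, hKG.inter hZG, ⟨hyK, hyZ⟩, ?_, ?_⟩
    · intro j hj
      exact inter_subset_left.trans (iInter_subset (fun j : Iio i => (g j).2) ⟨j, hj⟩)
    · exact hZd.mono_left inter_subset_right
  have mono : ∀ i j, i ≤ j → (g j).2 ⊆ (g i).2 := by
    intro i j h
    rcases h.lt_or_eq with h | h
    · exact (good j).2.2.2.1 i h
    · rw [h]
  let T : I → Set X := fun i => closure ((fun j => (g j).1) '' Ici i)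
  obtain ⟨z, hz⟩ : (⋂ i, T i).Nonempty := by
    apply IsCompact.nonempty_iInter_of_directed_nonempty_isCompact_isClosed
    · have hT : Antitone T := fun a b h => closure_mono (image_mono (Ici_subset_Ici.2 h))
      exact hT.directed_ge
    · exact fun i => ⟨_, subset_closure ⟨i, self_mem_Ici, rfl⟩⟩
    · exact fun i => isClosed_closure.isCompact
    · exact fun i => isClosed_closure
  rw [mem_iInter] at hz
  have hzr : z ∈ closure (range fun j => (g j).1) :=
    closure_mono (image_subset_range _ _) (hz hne.some)
  obtain ⟨B, hB, hBc, hzB⟩ := htight _ z hzr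
  have hBex : ∀ x ∈ B, ∃ j, (g j).1 = x := fun x hx => hB hx
  choose! m hm using hBex
  -- A countable subset of `ω₁` is bounded, as otherwise `ω₁` would be a countable union of
  -- countable initial segments.
  obtain ⟨i, hi⟩ : ∃ i, ∀ x ∈ B, m x < i := by
    by_contra! h
    apply hI
    rw [← countable_univ_iff]
    refine (hBc.biUnion fun x _ => hIic (m x)).mono fun i _ => ?_
    obtain ⟨x, hx, hix⟩ := h i
    exact mem_biUnion hx hix
  have hz1 : z ∈ (g i).2 := by
    refine closure_minimal ?_ (good i).1 (hz i)
    rintro _ ⟨j, hj, rfl⟩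
    exact mono i j hj (good j).2.2.1
  have hBi : B ⊆ {x | ∃ j, ∃ _ : j < i, x = (g j).1} :=
    fun x hx => ⟨m x, hi x hx, (hm x hx).symm⟩
  have hz2 := closure_mono hBi hzB
  exact Set.disjoint_left.1 (good i).2.2.2.2 hz1 hz2

/-- A nonempty countably tight compactum has a point which is the intersection of a family of open
sets indexed by `ℕ ⊕ Set ℕ`, that is, a point of pseudocharacter at most `𝔠`. -/
lemma exists_pseudobase [Nonempty X]
    (htight : ∀ (A : Set X) (x : X), x ∈ closure A →
      ∃ B ⊆ A, B.Countable ∧ x ∈ closure B) :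
    ∃ (p : X) (U : ℕ ⊕ Set ℕ → Set X), (∀ j, IsOpen (U j) ∧ p ∈ U j) ∧
      ∀ q, q ≠ p → ∃ j, q ∉ U j := by
  classical
  obtain ⟨H, D, hH, ⟨p, hp⟩, hD, hHD⟩ := exists_Gδ_subset_closure htight
  obtain ⟨G, hG, rfl⟩ := isGδ_iff_eq_iInter_nat.1 hH
  obtain ⟨d, rfl⟩ := hD.exists_eq_range (closure_nonempty_iff.1 ⟨p, hHD hp⟩)
  rw [mem_iInter] at hp
  refine ⟨p, Sum.elim G fun E => if p ∈ closure (d '' E) then Set.univ else (closure (d '' E))ᶜ,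
    ?_, ?_⟩
  · rintro (n | E)
    · exact ⟨hG n, hp n⟩
    · by_cases h : p ∈ closure (d '' E)
      · simp [h]
      · simp only [Sum.elim_inr, if_neg h]
        exact ⟨isClosed_closure.isOpen_compl, h⟩
  · intro q hq
    by_cases hqG : ∀ n, q ∈ G n
    · obtain ⟨V, W, hV, hW, hqV, hpW, hVW⟩ := t2_separation hq
      refine ⟨Sum.inr (d ⁻¹' V), ?_⟩
      have hp' : p ∉ closure (d '' (d ⁻¹' V)) := by
        intro h
        obtain ⟨x, hxW, hxV⟩ := mem_closure_iff.1 h W hW hpW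
        exact Set.disjoint_left.1 hVW (image_preimage_subset d V hxV) hxW
      simp only [Sum.elim_inr, if_neg hp', mem_compl_iff, not_not]
      rw [mem_closure_iff]
      intro O hO hqO
      obtain ⟨x, ⟨hxO, hxV⟩, ⟨n, rfl⟩⟩ :=
        mem_closure_iff.1 (hHD (mem_iInter.2 hqG)) (O ∩ V) (hO.inter hV) ⟨hqO, hqV⟩
      exact ⟨d n, hxO, n, hxV, rfl⟩
    · push Not at hqG
      obtain ⟨n, hn⟩ := hqG
      exact ⟨Sum.inl n, hn⟩

end

/-- There are at most `2 ^ 𝔠` closing-off operations on sequences. -/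
lemma mk_operations_le :
    #(Filter ℕ ⊕ (ℕ → ℕ ⊕ Set ℕ)) ≤ (2 : Cardinal.{0}) ^ continuum := by
  have hc : continuum ≤ (2 : Cardinal.{0}) ^ continuum := (cantor _).le
  have hF : #(Filter ℕ) ≤ (2 : Cardinal.{0}) ^ continuum := by
    have := mk_le_of_injective (f := Filter.sets (α := ℕ)) fun _ _ h => Filter.filter_eq h
    simpa using this
  have hJ : #(ℕ → ℕ ⊕ Set ℕ) = continuum := by
    simp
  rw [mk_sum, lift_id, lift_id, hJ]
  exact add_le_of_le (aleph0_le_continuum.trans hc) hF hc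

/-- A homogeneous, countably tight compact Hausdorff space has cardinality at most
`2^𝔠`, where `𝔠 = 2^ℵ₀`. -/
theorem card_le_two_pow_continuum_of_homogeneous_countablyTight (X : Type*)
    [TopologicalSpace X] [CompactSpace X] [T2Space X]
    (hhom : ∀ x y : X, ∃ h : X ≃ₜ X, h x = y)
    (htight : ∀ (A : Set X) (x : X), x ∈ closure A →
      ∃ B ⊆ A, B.Countable ∧ x ∈ closure B) :
    Cardinal.mk X ≤ 2 ^ Cardinal.continuum := by
  classical
  rcases isEmpty_or_nonempty X with hX | hX
  · simp
  obtain ⟨p, U₀, hU₀, hsep₀⟩ := exists_pseudobase htight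
  -- By homogeneity, the family at `p` is carried to every other point.
  have hU : ∀ x : X, ∃ U : ℕ ⊕ Set ℕ → Set X, (∀ j, IsOpen (U j) ∧ x ∈ U j) ∧
      ∀ q, q ≠ x → ∃ j, q ∉ U j := by
    intro x
    obtain ⟨h, hx⟩ := hhom x p
    refine ⟨fun j => h ⁻¹' U₀ j, fun j => ⟨(hU₀ j).1.preimage h.continuous, ?_⟩, fun q hq => ?_⟩
    · simpa [hx] using (hU₀ j).2
    · exact hsep₀ (h q) fun he => hq (h.injective (he.trans hx.symm))
  choose U hU hsep using hU
  let op : Filter ℕ ⊕ (ℕ → ℕ ⊕ Set ℕ) → (ℕ → X) → X := fun o s => match o with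
    | Sum.inl F => limUnder F s
    | Sum.inr c => if h : ∃ q, q ∉ ⋃ i, U (s i) (c i) then h.choose else s 0
  have hκ : ((2 : Cardinal.{0}) ^ continuum) ^ ℵ₀ = 2 ^ continuum := by
    rw [← power_mul, continuum_mul_aleph0]
  obtain ⟨A, hAne, hAcard, hA⟩ := exists_closed_under op (2 ^ continuum) hκ
    (aleph0_le_continuum.trans (cantor _).le) mk_operations_le
  have hAclosed : IsClosed A := by
    refine isClosed_of_closure_subset fun x hx => ?_
    obtain ⟨B, hBA, hBc, hxB⟩ := htight A x hx
    obtain ⟨s, rfl⟩ := hBc.exists_eq_range (closure_nonempty_iff.1 ⟨x, hxB⟩)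
    -- `x` is recovered as the limit of `s` along the trace on `ℕ` of its neighbourhood filter.
    have : NeBot (comap s (𝓝 x)) := by
      rw [comap_neBot_iff_frequently]
      exact mem_closure_iff_frequently.1 hxB
    have hlim : limUnder (comap s (𝓝 x)) s = x := (tendsto_comap : Tendsto s _ (𝓝 x)).limUnder_eq
    have := hA (Sum.inl (comap s (𝓝 x))) s fun n => hBA ⟨n, rfl⟩
    simpa only [op, hlim] using this
  have hAuniv : A = Set.univ := by
    refine eq_univ_of_forall fun q => ?_
    by_contra hq
    have hne : ∀ a : X, ∃ j, a ∈ A → q ∉ U a j := by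
      intro a
      by_cases ha : a ∈ A
      · obtain ⟨j, hj⟩ := hsep a q fun h => hq (h ▸ ha)
        exact ⟨j, fun _ => hj⟩
      · exact ⟨Sum.inl 0, fun h => absurd h ha⟩
    choose j hj using hne
    obtain ⟨t, htA, hcover⟩ := hAclosed.isCompact.elim_nhds_subcover (fun a => U a (j a))
      fun a _ => (hU a (j a)).1.mem_nhds (hU a (j a)).2
    have htne : (t : Set X).Nonempty := by
      obtain ⟨a, ha⟩ := hAne
      obtain ⟨b, hb, -⟩ := mem_iUnion₂.1 (hcover ha)
      exact ⟨b, hb⟩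
    obtain ⟨s, hs⟩ := t.countable_toSet.exists_eq_range htne
    have hst : ∀ n, s n ∈ t := fun n => by
      rw [← Finset.mem_coe, hs]
      exact ⟨n, rfl⟩
    have hex : ∃ q, q ∉ ⋃ i, U (s i) (j (s i)) :=
      ⟨q, by simpa using fun i => hj (s i) (htA _ (hst i))⟩
    have hmem := hA (Sum.inr fun i => j (s i)) s fun n => htA _ (hst n)
    simp only [op, dif_pos hex] at hmem
    apply hex.choose_spec
    obtain ⟨b, hb, hb'⟩ := mem_iUnion₂.1 (hcover hmem)
    rw [← Finset.mem_coe, hs] at hb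
    obtain ⟨n, rfl⟩ := hb
    exact mem_iUnion.2 ⟨n, hb'⟩
  rw [hAuniv] at hAcard
  simpa using hAcard
end

section
/- Let B be a compact Hausdorff topological space, let b be a point of B such that B \ {b} is Lindelöf, and let κ be any index type (of arbitrary cardinality). Then the space (∏_{i ∈ κ} B) \ {p}, where p is the point all of whose coordinates equal b and the product carries the product topology, is star-Lindelöf: for every open cover 𝒰 of this space there is a countable subset A of the space such that the star St(A, 𝒰) = ⋃ { U ∈ 𝒰 : U ∩ A ≠ ∅ } equals the whole space. -/
/-!
Write `p` for the constant point with value `b`. Since `B \ {b}` is Lindelöf and `B` is compact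
Hausdorff, `B \ {b}` is a countable union of compact sets, so each set `{x | x i ≠ b}` is Lindelöf
(`isLindelof_coord_ne`). Refine the cover by boxes, each depending on finitely many coordinates;
then `{x | x i ≠ b}` is covered by countably many boxes, whose supports lie in a countable set
`F i` of coordinates.

Closing off under `F` splits `κ` into countable blocks indexed by a well-order, in such a way that
`F i` never leaves the blocks up to that of `i` (`exists_rank`). Given `x ≠ p`, let `i` be a
coordinate with `x i ≠ b` in the first possible block. A box around `x` chosen for `i` then contains
a point which equals `b` on all earlier blocks, and only countably many boxes are involved for each
block. Enumerate them, and fix an index `l`: each block `α` carries one box, whose finite support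
meets finitely many earlier blocks, so the blocks can be coloured by `ℕ` so that these earlier
blocks never have the colour of `α` (`exists_coloring`). For a colour `c`, the single point that
follows the chosen points on blocks of colour `c` and is `b` elsewhere lies in the `l`-th box of
every block of colour `c`. The countably many points obtained from the pairs `(l, c)` form `A`.
-/

/-- A graph on a well-order in which every vertex has finitely many smaller neighbours is countably
colourable: greedily give each vertex a colour not used by those neighbours. -/
lemma exists_coloring {α : Type*} [LinearOrder α] [WellFoundedLT α] (G : α → Finset α) :
    ∃ c : α → ℕ, ∀ a, ∀ d ∈ G a, d < a → c d ≠ c a := by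
  classical
  let S : ∀ a : α, (∀ d, d < a → ℕ) → Finset ℕ := fun a ih =>
    (G a).image (fun d => if h : d < a then ih d h else 0)
  let step : ∀ a : α, (∀ d, d < a → ℕ) → ℕ := fun a ih =>
    (Infinite.exists_notMem_finset (S a ih)).choose
  have hstep : ∀ a ih, step a ih ∉ S a ih := fun a ih =>
    (Infinite.exists_notMem_finset (S a ih)).choose_spec
  let wf : WellFounded (fun x y : α => x < y) := wellFounded_lt
  refine ⟨wf.fix step, fun a d hd hda heq => ?_⟩
  rw [wf.fix_eq step a] at heq
  refine hstep a (fun y _ => wf.fix step y) ?_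
  rw [← heq]
  exact Finset.mem_image.2 ⟨d, hd, by simp [hda]⟩

lemma countable_reachable {κ : Type*} (F : κ → Set κ) (hF : ∀ i, (F i).Countable) (i : κ) :
    {j | Relation.ReflTransGen (fun a d => d ∈ F a) i j}.Countable := by
  let S : ℕ → Set κ := fun n => Nat.rec {i} (fun _ s => ⋃ a ∈ s, F a) n
  have hS : ∀ n, (S n).Countable := by
    intro n
    induction n with
    | zero => exact Set.countable_singleton i
    | succ n ih => exact ih.biUnion fun a _ => hF a
  refine (Set.countable_iUnion hS).mono fun j hj => ?_
  induction (show Relation.ReflTransGen (fun a d => d ∈ F a) i j from hj) with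
  | refl => exact Set.mem_iUnion.2 ⟨0, rfl⟩
  | tail _ h ih =>
    obtain ⟨n, hn⟩ := Set.mem_iUnion.1 (ih ‹_›)
    exact Set.mem_iUnion.2 ⟨n + 1, Set.mem_biUnion hn h⟩

/-- A countable-valued set mapping `F` admits a rank function into a well-order that has countable
fibres and does not increase along `F`: the rank of `j` is the least point from which `j` is
reachable along `F`. -/
lemma exists_rank {κ : Type*} (F : κ → Set κ) (hF : ∀ i, (F i).Countable) :
    ∃ (_ : LinearOrder κ) (_ : WellFoundedLT κ) (r : κ → κ),
      (∀ α, {j | r j = α}.Countable) ∧ ∀ i, ∀ j ∈ F i, r j ≤ r i := by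
  obtain ⟨o, hwf⟩ := exists_wellFoundedLT κ
  let R : κ → κ → Prop := Relation.ReflTransGen (fun a d => d ∈ F a)
  have hne : ∀ j, {i | R i j}.Nonempty := fun j => ⟨j, Relation.ReflTransGen.refl⟩
  let wf : WellFounded (fun x y : κ => x < y) := wellFounded_lt
  let r : κ → κ := fun j => wf.min {i | R i j} (hne j)
  have hr : ∀ j, R (r j) j := fun j => wf.min_mem _ (hne j)
  refine ⟨o, hwf, r, fun α => ?_, fun i j hj => ?_⟩
  · refine (countable_reachable F hF α).mono ?_
    rintro j rfl
    exact hr j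
  · exact not_lt.1 (wf.not_lt_min {i | R i j} ((hr i).tail hj))

lemma isLindelof_coord_ne {B : Type*} [TopologicalSpace B] [CompactSpace B] [T2Space B] (b : B)
    (hL : IsLindelof ({b}ᶜ : Set B)) {κ : Type*} (i : κ) :
    IsLindelof {x : κ → B | x i ≠ b} := by
  have h : ∀ x ∈ ({b}ᶜ : Set B), ∃ C ∈ nhds x, IsClosed C ∧ C ⊆ {b}ᶜ := fun x hx =>
    exists_mem_nhds_isClosed_subset (isOpen_compl_singleton.mem_nhds hx)
  choose! C hC hCc hCb using h
  obtain ⟨T, hT, hTs, hcov⟩ := hL.elim_nhds_subcover C hC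
  have hEq : {x : κ → B | x i ≠ b} = ⋃ t ∈ T, (fun x : κ → B => x i) ⁻¹' C t := by
    ext x
    simp only [Set.mem_ofPred_eq, Set.mem_iUnion, Set.mem_preimage, exists_prop]
    constructor
    · intro hx
      simpa using hcov hx
    · rintro ⟨t, ht, hxt⟩
      exact hCb t (hTs t ht) hxt
  rw [hEq]
  exact hT.isLindelof_biUnion fun t ht =>
    ((hCc t (hTs t ht)).preimage (continuous_apply i)).isCompact.isLindelof

/-- **Kozma's theorem**: if `B` is compact Hausdorff and `B \ {b}` is Lindelöf, then for
any index type `κ`, the space `B^κ \ {p}` (where `p` is the constant point with value `b`)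
is star-Lindelöf: every open cover `𝒰` admits a countable set `A` whose star
`⋃ {U ∈ 𝒰 : U ∩ A ≠ ∅}` is the whole space. -/
theorem star_lindelof_power_compact_minus_point {B : Type*} [TopologicalSpace B]
    [CompactSpace B] [T2Space B] (b : B) (hL : IsLindelof ({b}ᶜ : Set B))
    (κ : Type*) :
    ∀ 𝒰 : Set (Set ({fun _ : κ => b}ᶜ : Set (κ → B))),
      (∀ U ∈ 𝒰, IsOpen U) → ⋃₀ 𝒰 = Set.univ →
      ∃ A : Set ({fun _ : κ => b}ᶜ : Set (κ → B)), A.Countable ∧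
        ⋃₀ {U | U ∈ 𝒰 ∧ (U ∩ A).Nonempty} = Set.univ := by
  classical
  intro 𝒰 hO hcov
  rcases isEmpty_or_nonempty κ with hκ | hκ
  · refine ⟨∅, Set.countable_empty, Set.eq_univ_of_forall fun x => ?_⟩
    exact absurd (Subsingleton.elim x.1 _) x.2
  have hbox : ∀ x : κ → B, x ≠ (fun _ => b) → ∃ (I : Finset κ) (u : κ → Set B),
      (I : Set κ).pi u ∈ nhds x ∧
        ∃ U ∈ 𝒰, ∀ z : ({fun _ : κ => b}ᶜ : Set (κ → B)), z.1 ∈ (I : Set κ).pi u → z ∈ U := by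
    intro x hx
    obtain ⟨U, hU, hxU⟩ : (⟨x, hx⟩ : ({fun _ : κ => b}ᶜ : Set (κ → B))) ∈ ⋃₀ 𝒰 :=
      hcov ▸ Set.mem_univ _
    obtain ⟨V, hV, rfl⟩ := isOpen_induced_iff.1 (hO U hU)
    obtain ⟨I, u, hu, hIV⟩ := isOpen_pi_iff.1 hV x hxU
    exact ⟨I, u, set_pi_mem_nhds I.finite_toSet fun i hi => (hu i hi).1.mem_nhds (hu i hi).2,
      _, hU, fun z hz => hIV hz⟩
  choose! I u hnhds U hU hbU using hbox
  have hT : ∀ i : κ, ∃ T : Set (κ → B), T.Countable ∧ (∀ t ∈ T, t ≠ fun _ => b) ∧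
      {x : κ → B | x i ≠ b} ⊆ ⋃ t ∈ T, (I t : Set κ).pi (u t) := by
    intro i
    have hne : ∀ x ∈ {x : κ → B | x i ≠ b}, x ≠ fun _ => b := fun x hx h => hx (congrFun h i)
    obtain ⟨T, h1, h2, h3⟩ := (isLindelof_coord_ne b hL i).elim_nhds_subcover
      (fun t => (I t : Set κ).pi (u t)) fun x hx => hnhds x (hne x hx)
    exact ⟨T, h1, fun t ht => hne t (h2 t ht), h3⟩
  choose T hTc hTne hTcov using hT
  obtain ⟨_, _, r, hrc, hrF⟩ := exists_rank (fun i => ⋃ t ∈ T i, (I t : Set κ))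
    fun i => (hTc i).biUnion fun t _ => (I t).countable_toSet
  have hrI : ∀ i, ∀ t ∈ T i, ∀ j ∈ I t, r j ≤ r i := fun i t ht j hj =>
    hrF i j (Set.mem_biUnion ht hj)
  have henum : ∀ α, ∃ e : ℕ → κ × (κ → B), ∀ i, r i = α → ∀ t ∈ T i, ∃ l, e l = (i, t) := by
    intro α
    have hc : (⋃ i ∈ {j | r j = α}, Prod.mk i '' T i).Countable :=
      (hrc α).biUnion fun i _ => (hTc i).image _
    have : Nonempty B := ⟨b⟩
    obtain ⟨e, he⟩ := Set.countable_iff_exists_subset_range.1 hc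
    exact ⟨e, fun i hi t ht => he (Set.mem_biUnion (show i ∈ {j | r j = α} from hi) ⟨t, ht, rfl⟩)⟩
  choose e he using henum
  have hY : ∀ q : κ × (κ → B), ∃ y : κ → B,
      (∃ z ∈ (I q.2 : Set κ).pi (u q.2), z q.1 ≠ b ∧ ∀ j, r j < r q.1 → z j = b) →
        y ∈ (I q.2 : Set κ).pi (u q.2) ∧ y q.1 ≠ b ∧ ∀ j, r j < r q.1 → y j = b := by
    intro q
    by_cases h : ∃ z ∈ (I q.2 : Set κ).pi (u q.2), z q.1 ≠ b ∧ ∀ j, r j < r q.1 → z j = b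
    · exact ⟨h.choose, fun _ => h.choose_spec⟩
    · exact ⟨fun _ => b, fun h' => absurd h' h⟩
  choose Y hY using hY
  choose c hc using fun l : ℕ => exists_coloring (fun α => (I (e α l).2).image r)
  let a : ℕ × ℕ → κ → B := fun m j => if c m.1 (r j) = m.2 then Y (e (r j) m.1) j else b
  refine ⟨Subtype.val ⁻¹' Set.range a,
    (Set.countable_range a).preimage Subtype.val_injective, Set.eq_univ_of_forall fun x => ?_⟩
  -- `i` is a coordinate of least rank at which `x` differs from `b`.
  obtain ⟨i, hi, hmin⟩ : ∃ i, x.1 i ≠ b ∧ ∀ j, r j < r i → x.1 j = b := by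
    have hne : {j | x.1 j ≠ b}.Nonempty := Function.ne_iff.1 x.2
    obtain ⟨i, hi, hm⟩ := (InvImage.wf r (wellFounded_lt (α := κ))).has_min _ hne
    exact ⟨i, hi, fun j hj => by_contra fun h => hm j h hj⟩
  obtain ⟨t, ht, hxt⟩ := Set.mem_iUnion₂.1 (hTcov i hi)
  obtain ⟨l, hl⟩ := he (r i) i rfl t ht
  obtain ⟨hy1, hy2, hy3⟩ := hY (i, t) ⟨x.1, hxt, hi, hmin⟩
  have hsame : ∀ j, r j = r i → a (l, c l (r i)) j = Y (i, t) j := by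
    intro j hj
    simp [a, hj, hl]
  have haI : ∀ j ∈ I t, a (l, c l (r i)) j = Y (i, t) j := by
    intro j hj
    rcases (hrI i t ht j hj).lt_or_eq with h | h
    · have hcol : c l (r j) ≠ c l (r i) :=
        hc l (r i) (r j) (Finset.mem_image_of_mem r (by rw [hl]; exact hj)) h
      rw [hy3 j h]
      simp [a, hcol]
    · exact hsame j h
  have hap : a (l, c l (r i)) ≠ fun _ => b := fun h =>
    hy2 (by rw [← hsame i rfl, h])
  refine ⟨U t, ⟨hU t (hTne i t ht), ⟨a (l, c l (r i)), hap⟩, ?_, ⟨_, rfl⟩⟩,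
    hbU t (hTne i t ht) x hxt⟩
  refine hbU t (hTne i t ht) _ fun j hj => ?_
  show a (l, c l (r i)) j ∈ u t j
  rw [haI j hj]
  exact hy1 j hj
end
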